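/- arXiv:1406.4777 — 5 statements merged into one kernel-verified Lean document; each statement's English description precedes it below -/
import Mathlib

section
/- Let G be a finite simple graph and v a vertex of G, and let G−v denote the induced subgraph of G on the remaining vertices. If r(G−v) ≥ deg_G(v) + 1, where deg_G(v) is the degree of v in G, then r(G) = r(G−v). -/
/-!
The two inequalities hold level by level. Write `W` for the vertex set of `G - v`.

*From `G` to `G - v`* (`gRankProp_comap`). A rank `r` positive semidefinite matrix `A'` on `W` in
general position extends to such a matrix on `V`: view `A'` as a Gram matrix and let the vector
of `v` be a linear combination, with coefficients `u`, of the others. The extension is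
`Tᵀ A' T` with `T z = z|_W + z_v u`, and it is in general position unless `u` lies in one of
finitely many proper subspaces `ker A' + {z supported on β}`, `|β| < r`
(`exists_generic_coeff`). A positive definite matrix matching the extension restricts to one
matching `A'`.

*From `G - v` to `G`, when `deg v < r`* (`gRankProp_of_comap`). Let `A` on `V` have rank `r` and be
in general position, let `A'` be its restriction to `W` and `P'` a positive definite match of `A'`.
All `M_t = (1 - t) A' + t P'` match `A'`, and they are positive definite for `0 < t ≤ 1`. On the
neighbourhood `N` of `v`, `M_0 = A_N`. Since `|N ∪ {v}| ≤ r`, the block of `A` on `N ∪ {v}`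
is positive definite, so its Schur complement is positive: `aᵀ A_N⁻¹ a < A_vv`, where `a` is the
column of `v` in `A`. By continuity `aᵀ (M_t)_N⁻¹ a < A_vv` for some `t > 0`. With
`c = (M_t)_N⁻¹ a` extended by zero, the matrix `Tᵀ M_t T + δ e_v e_vᵀ`, where `T z = z|_W + z_v c`
and `δ = A_vv - cᵀ M_t c > 0`, is positive definite and matches `A` on `G`.

General position is used throughout in the kernel form `det_submatrix_ne_zero_iff`: for `A`
positive semidefinite, the block of `A` on `α` is nonsingular iff `ker A` contains no nonzero
vector supported on `α`.
-/

open Matrix MeasureTheory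

/-- Two matrices match on a graph `G`: equal diagonals and equal entries on all edges. -/
def MatchOn {V : Type*} (G : SimpleGraph V) (A B : Matrix V V ℝ) : Prop :=
  (∀ i, A i i = B i i) ∧ ∀ i j, G.Adj i j → A i j = B i j

/-- A real symmetric positive semidefinite matrix of rank `d` is in general position if
every `d × d` principal submatrix is nonsingular. -/
def InGenPos {V : Type*} [Fintype V] [DecidableEq V] (A : Matrix V V ℝ) (d : ℕ) : Prop :=
  A.PosSemidef ∧ A.rank = d ∧
    ∀ α : Finset V, α.card = d →
      (A.submatrix (fun i : α => (i : V)) (fun i : α => (i : V))).det ≠ 0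

/-- The defining property of the Gaussian rank at level `r`. -/
def GRankProp {V : Type*} [Fintype V] [DecidableEq V] (G : SimpleGraph V) (r : ℕ) : Prop :=
  ∀ A : Matrix V V ℝ, InGenPos A r → ∃ P : Matrix V V ℝ, P.PosDef ∧ MatchOn G P A

/-- The Gaussian rank of a graph. -/
noncomputable def gaussianRank {V : Type*} [Fintype V] [DecidableEq V]
    (G : SimpleGraph V) : ℕ :=
  sInf {r : ℕ | 0 < r ∧ GRankProp G r}

/-- Vertex connectivity: the least size of a vertex set whose deletion disconnects the
graph or leaves at most one vertex. -/
noncomputable def vertexConn {V : Type*} (G : SimpleGraph V) : ℕ :=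
  sInf {k : ℕ | ∃ S : Set V, S.ncard = k ∧
    (¬ (G.induce Sᶜ).Connected ∨ Sᶜ.ncard ≤ 1)}

/-- Subgraph connectivity number: the maximum vertex connectivity over all subgraphs. -/
noncomputable def subgraphConn {V : Type*} (G : SimpleGraph V) : ℕ :=
  sSup {k : ℕ | ∃ H : G.Subgraph, vertexConn H.coe = k}

/-- Minimum degree of a graph. -/
noncomputable def minDeg {V : Type*} (G : SimpleGraph V) : ℕ :=
  sInf {k : ℕ | ∃ v, (G.neighborSet v).ncard = k}

/-- Degeneracy number: the maximum over all subgraphs of the minimum degree. -/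
noncomputable def degeneracy {V : Type*} (G : SimpleGraph V) : ℕ :=
  sSup {k : ℕ | ∃ H : G.Subgraph, minDeg H.coe = k}

/-! ### Kernels and principal submatrices -/

lemma quad_nonneg {V : Type*} [Fintype V] {A : Matrix V V ℝ} (hA : A.PosSemidef) (z : V → ℝ) :
    0 ≤ z ⬝ᵥ (A *ᵥ z) := by
  simpa using hA.dotProduct_mulVec_nonneg z

lemma quad_eq_zero_iff {V : Type*} [Fintype V] {A : Matrix V V ℝ} (hA : A.PosSemidef)
    (z : V → ℝ) : z ⬝ᵥ (A *ᵥ z) = 0 ↔ A *ᵥ z = 0 := by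
  simpa using hA.dotProduct_mulVec_zero_iff z

lemma congr_form {V W : Type*} [Fintype V] [Fintype W] (A : Matrix W W ℝ) (T : Matrix W V ℝ)
    (x y : V → ℝ) : x ⬝ᵥ ((Tᵀ * A * T) *ᵥ y) = (T *ᵥ x) ⬝ᵥ (A *ᵥ (T *ᵥ y)) := by
  rw [← Matrix.mulVec_mulVec, ← Matrix.mulVec_mulVec, Matrix.dotProduct_mulVec,
    Matrix.vecMul_transpose]

lemma posSemidef_congr {V W : Type*} [Fintype V] [Fintype W] {A : Matrix W W ℝ}
    (hA : A.PosSemidef) (T : Matrix W V ℝ) : (Tᵀ * A * T).PosSemidef := by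
  simpa using hA.conjTranspose_mul_mul_same T

lemma congr_ker {V W : Type*} [Fintype V] [Fintype W] {A : Matrix W W ℝ} (hA : A.PosSemidef)
    (T : Matrix W V ℝ) (z : V → ℝ) : (Tᵀ * A * T) *ᵥ z = 0 ↔ A *ᵥ (T *ᵥ z) = 0 := by
  rw [← quad_eq_zero_iff (posSemidef_congr hA T), congr_form, quad_eq_zero_iff hA]

/-- The matrix of extension by zero along `e : W → V`, for injective `e`. -/
def extMat {V W : Type*} [DecidableEq V] (e : W → V) : Matrix V W ℝ :=
  (1 : Matrix V V ℝ).submatrix id e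

lemma extMat_apply {V W : Type*} [DecidableEq V] [Fintype W] {e : W → V}
    (he : e.Injective) (z : W → ℝ) (w : W) : (extMat e *ᵥ z) (e w) = z w := by
  classical
  simp [extMat, Matrix.mulVec, dotProduct, Matrix.one_apply, he.eq_iff]

lemma extMat_apply_of_notMem {V W : Type*} [DecidableEq V] [Fintype W] {e : W → V}
    (z : W → ℝ) {x : V} (hx : ∀ w, e w ≠ x) : (extMat e *ᵥ z) x = 0 := by
  simp [extMat, Matrix.mulVec, dotProduct, fun w => (hx w).symm]

lemma transpose_extMat_mulVec {V W : Type*} [Fintype V] [DecidableEq V] (e : W → V)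
    (z : V → ℝ) : (extMat e)ᵀ *ᵥ z = z ∘ e := by
  ext w
  simp [extMat, Matrix.mulVec, dotProduct, Matrix.one_apply]

lemma submatrix_eq_congr {V W : Type*} [Fintype V] [DecidableEq V] (A : Matrix V V ℝ)
    (e : W → V) : A.submatrix e e = (extMat e)ᵀ * A * extMat e := by
  ext i j
  simp [extMat, Matrix.mul_apply, Matrix.one_apply]

lemma submatrix_ker {V W : Type*} [Fintype V] [DecidableEq V] [Fintype W] {A : Matrix V V ℝ}
    (hA : A.PosSemidef) (e : W → V) (z : W → ℝ) :
    A.submatrix e e *ᵥ z = 0 ↔ A *ᵥ (extMat e *ᵥ z) = 0 := by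
  rw [submatrix_eq_congr, congr_ker hA]

lemma det_ne_zero_iff_ker {W : Type*} [Fintype W] [DecidableEq W] (A : Matrix W W ℝ) :
    A.det ≠ 0 ↔ ∀ z, A *ᵥ z = 0 → z = 0 := by
  rw [Ne, ← Matrix.exists_mulVec_eq_zero_iff]
  constructor
  · intro h z hz
    by_contra hne
    exact h ⟨z, hne, hz⟩
  · rintro h ⟨z, hne, hz⟩
    exact hne (h z hz)

lemma det_submatrix_ne_zero_iff {V : Type*} [Fintype V] [DecidableEq V] {A : Matrix V V ℝ}
    (hA : A.PosSemidef) (α : Finset V) :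
    (A.submatrix (fun i : α => (i : V)) (fun i : α => (i : V))).det ≠ 0 ↔
      ∀ z : V → ℝ, (∀ i, i ∉ α → z i = 0) → A *ᵥ z = 0 → z = 0 := by
  have hinj : Function.Injective (fun i : α => (i : V)) := Subtype.val_injective
  rw [det_ne_zero_iff_ker]
  constructor
  · intro h z hz hAz
    have hext : extMat (fun i : α => (i : V)) *ᵥ (fun i : α => z i) = z := by
      ext x
      by_cases hx : x ∈ α
      · exact extMat_apply hinj (fun i : α => z i) ⟨x, hx⟩
      · rw [hz x hx]
        exact extMat_apply_of_notMem _ (fun w hw => hx (hw ▸ w.2))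
    have h0 := h (fun i : α => z i) ((submatrix_ker hA _ _).2 (by rw [hext]; exact hAz))
    rw [← hext, h0, Matrix.mulVec_zero]
  · intro h z hz
    have h0 := h (extMat (fun i : α => (i : V)) *ᵥ z)
      (fun i hi => extMat_apply_of_notMem z (fun w hw => hi (hw ▸ w.2)))
      ((submatrix_ker hA _ _).1 hz)
    ext w
    rw [← extMat_apply hinj z w, h0]
    rfl

/-- The kernel of a matrix of rank `r` in general position contains no nonzero vector with at most
`r` nonzero entries. -/
lemma InGenPos.eq_zero_of_ker {V : Type*} [Fintype V] [DecidableEq V] {A : Matrix V V ℝ} {r : ℕ}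
    (hA : InGenPos A r) {α : Finset V} (hα : α.card ≤ r) {z : V → ℝ}
    (hz : ∀ i, i ∉ α → z i = 0) (hAz : A *ᵥ z = 0) : z = 0 := by
  have hr : r ≤ Fintype.card V := hA.2.1 ▸ A.rank_le_card_width
  obtain ⟨β, hαβ, hβ⟩ := Finset.exists_superset_card_eq hα hr
  exact (det_submatrix_ne_zero_iff hA.1 β).1 (hA.2.2 β hβ) z
    (fun i hi => hz i (fun h => hi (hαβ h))) hAz

lemma posDef_of_ker {V : Type*} [Fintype V] {A : Matrix V V ℝ} (hA : A.PosSemidef)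
    (h : ∀ z, A *ᵥ z = 0 → z = 0) : A.PosDef := by
  classical
  exact hA.posDef_iff_det_ne_zero.2 ((det_ne_zero_iff_ker A).2 h)

/-- General position passes to principal submatrices of size at least the rank. -/
lemma InGenPos.submatrix {V W : Type*} [Fintype V] [DecidableEq V] [Fintype W] [DecidableEq W]
    {A : Matrix V V ℝ} {r : ℕ} (hA : InGenPos A r) {e : W → V} (he : e.Injective)
    (hr : r ≤ Fintype.card W) : InGenPos (A.submatrix e e) r := by
  have hpsd : (A.submatrix e e).PosSemidef := hA.1.submatrix e
  have hdet : ∀ α : Finset W, α.card = r →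
      ((A.submatrix e e).submatrix (fun i : α => (i : W)) (fun i : α => (i : W))).det ≠ 0 := by
    intro α hα
    rw [det_submatrix_ne_zero_iff hpsd]
    intro z hz hAz
    have h0 := hA.eq_zero_of_ker (α := α.image e) (Finset.card_image_le.trans hα.le)
      (z := extMat e *ᵥ z) ?_ ((submatrix_ker hA.1 _ _).1 hAz)
    · ext w
      rw [← extMat_apply he z w, h0]
      rfl
    · intro i hi
      by_cases hiw : ∃ w, e w = i
      · obtain ⟨w, rfl⟩ := hiw
        rw [extMat_apply he]
        exact hz w (fun hw => hi (Finset.mem_image_of_mem e hw))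
      · exact extMat_apply_of_notMem z (fun w hw => hiw ⟨w, hw⟩)
  refine ⟨hpsd, le_antisymm ((A.rank_submatrix_le e e).trans hA.2.1.le) ?_, hdet⟩
  obtain ⟨α, -, hα⟩ := Finset.exists_superset_card_eq (s := (∅ : Finset W)) (Nat.zero_le r) hr
  have h1 := Matrix.rank_of_isUnit _
    ((Matrix.isUnit_iff_isUnit_det _).2 (isUnit_iff_ne_zero.2 (hdet α hα)))
  rw [Fintype.card_coe, hα] at h1
  rw [← h1]
  exact Matrix.rank_submatrix_le _ _ _

/-! ### Adjoining a vertex as a linear combination of the others -/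

/-- For `V = e(W) ∪ {v}`, the matrix of the map `z ↦ z ∘ e + z v • u`. If `A` is the Gram matrix of
`(x_w)`, then `Tᵀ A T` is the Gram matrix of the family extended by `x_v = ∑ u_w x_w`. -/
def adjoinMat {V W : Type*} [DecidableEq V] (e : W → V) (v : V) (u : W → ℝ) : Matrix W V ℝ :=
  (extMat e)ᵀ + Matrix.vecMulVec u (Pi.single v 1)

lemma adjoinMat_mulVec {V W : Type*} [Fintype V] [DecidableEq V] (e : W → V) (v : V)
    (u : W → ℝ) (z : V → ℝ) (w : W) : (adjoinMat e v u *ᵥ z) w = z (e w) + z v * u w := by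
  rw [adjoinMat, Matrix.add_mulVec, transpose_extMat_mulVec, Matrix.vecMulVec_mulVec]
  simp [mul_comm]

lemma adjoinMat_single {V W : Type*} [Fintype V] [DecidableEq V] [DecidableEq W] {e : W → V}
    (he : e.Injective) {v : V} (hv : ∀ w, e w ≠ v) (u : W → ℝ) (w : W) :
    adjoinMat e v u *ᵥ Pi.single (e w) 1 = Pi.single w 1 := by
  ext w'
  rw [adjoinMat_mulVec]
  simp [Pi.single_apply, he.eq_iff, (hv w).symm]

lemma adjoinMat_single_self {V W : Type*} [Fintype V] [DecidableEq V] {e : W → V}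
    {v : V} (hv : ∀ w, e w ≠ v) (u : W → ℝ) :
    adjoinMat e v u *ᵥ Pi.single v 1 = u := by
  ext w'
  rw [adjoinMat_mulVec]
  simp [hv]

lemma apply_eq_form {V : Type*} [Fintype V] [DecidableEq V] (A : Matrix V V ℝ) (i j : V) :
    A i j = Pi.single i 1 ⬝ᵥ (A *ᵥ Pi.single j 1) := by
  simp

lemma adjoin_submatrix {V W : Type*} [Fintype V] [DecidableEq V] [Fintype W] [DecidableEq W]
    {e : W → V} (he : e.Injective) {v : V} (hv : ∀ w, e w ≠ v) (u : W → ℝ) (A : Matrix W W ℝ) :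
    ((adjoinMat e v u)ᵀ * A * adjoinMat e v u).submatrix e e = A := by
  ext i j
  rw [Matrix.submatrix_apply, apply_eq_form (_ * _), congr_form, adjoinMat_single he hv,
    adjoinMat_single he hv, ← apply_eq_form A]

/-- Some `u` is, modulo the kernel, not supported on fewer than `r` coordinates. -/
lemma exists_generic_coeff {W : Type*} [Fintype W] [DecidableEq W] {A : Matrix W W ℝ} {r : ℕ}
    (hA : InGenPos A r) :
    ∃ u : W → ℝ, ∀ β : Finset W, β.card < r → ∀ s : W → ℝ, (∀ i, i ∉ β → s i = 0) →
      A *ᵥ (u + s) ≠ 0 := by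
  let p : {β : Finset W // β.card < r} → Submodule ℝ (W → ℝ) := fun β =>
    LinearMap.ker A.mulVecLin ⊔ Submodule.pi ((β.1 : Set W)ᶜ) (fun _ => ⊥)
  by_contra! hcon
  have hcover : ⋃ i, (p i : Set (W → ℝ)) = Set.univ := by
    refine Set.eq_univ_of_forall fun u => ?_
    obtain ⟨β, hβ, s, hs, h0⟩ := hcon u
    refine Set.mem_iUnion.2 ⟨⟨β, hβ⟩, ?_⟩
    refine Submodule.mem_sup.2 ⟨u + s, by simpa using h0, -s, ?_, by simp⟩
    simpa [Submodule.mem_pi] using hs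
  obtain ⟨⟨β, hβ⟩, htop⟩ := Subspace.exists_eq_top_of_iUnion_eq_univ hcover
  have hr : r ≤ Fintype.card W := hA.2.1 ▸ A.rank_le_card_width
  -- A basis vector outside `β` is not in `ker A` plus the vectors supported on `β`.
  obtain ⟨b, hb⟩ : ∃ b, b ∉ β := by
    by_contra! h
    have h1 : β = Finset.univ := Finset.eq_univ_iff_forall.2 h
    rw [h1, Finset.card_univ] at hβ
    omega
  have hmem : (Pi.single b 1 : W → ℝ) ∈ p ⟨β, hβ⟩ := htop ▸ Submodule.mem_top
  obtain ⟨k, hk, s, hs, hks⟩ := Submodule.mem_sup.1 hmem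
  have hs' : ∀ i, i ∉ β → s i = 0 := by simpa [Submodule.mem_pi] using hs
  have hk0 : k = 0 := by
    refine hA.eq_zero_of_ker (α := insert b β) ?_ ?_ (by simpa using hk)
    · rw [Finset.card_insert_of_notMem hb]
      omega
    · intro i hi
      rw [Finset.mem_insert, not_or] at hi
      have := congrFun hks i
      simpa [hs' i hi.2, hi.1] using this
  have := congrFun hks b
  simp [hk0, hs' b hb] at this

lemma gRankProp_comap {V W : Type*} [Fintype V] [DecidableEq V] [Fintype W] [DecidableEq W]
    (G : SimpleGraph V) {e : W → V} (he : e.Injective) {v : V} (hv : ∀ w, e w ≠ v)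
    (hcov : ∀ x, x ≠ v → ∃ w, e w = x) {r : ℕ} (h : GRankProp G r) :
    GRankProp (G.comap e) r := by
  intro A hA
  obtain ⟨u, hu⟩ := exists_generic_coeff hA
  set T := adjoinMat e v u with hT
  have hpsd := posSemidef_congr hA.1 T
  have hsub : (Tᵀ * A * T).submatrix e e = A := adjoin_submatrix he hv u A
  have hgp : InGenPos (Tᵀ * A * T) r := by
    refine ⟨hpsd, le_antisymm ?_ ?_, ?_⟩
    · exact (Matrix.rank_mul_le_left _ _).trans
        ((Matrix.rank_mul_le_right _ _).trans hA.2.1.le)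
    · rw [← hA.2.1]
      conv_lhs => rw [← hsub]
      exact Matrix.rank_submatrix_le _ _ _
    · intro α hα
      rw [det_submatrix_ne_zero_iff hpsd]
      intro z hz hAz
      rw [congr_ker hA.1] at hAz
      let β : Finset W := Finset.univ.filter fun w => e w ∈ α
      have hβim : β.image e ⊆ α.erase v := by
        intro x hx
        obtain ⟨w, hw, rfl⟩ := Finset.mem_image.1 hx
        exact Finset.mem_erase.2 ⟨hv w, (Finset.mem_filter.1 hw).2⟩
      have hβcard : β.card ≤ (α.erase v).card := by
        rw [← Finset.card_image_of_injective β he]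
        exact Finset.card_le_card hβim
      have hβz : ∀ w, w ∉ β → z (e w) = 0 := fun w hw =>
        hz _ (fun h => hw (by simp [β, h]))
      by_cases hzv : z v = 0
      · have h0 := hA.eq_zero_of_ker (α := β)
          (hβcard.trans ((Finset.card_erase_le).trans hα.le)) (z := T *ᵥ z)
          (fun w hw => by rw [hT, adjoinMat_mulVec, hβz w hw, hzv]; simp) hAz
        ext x
        by_cases hx : x = v
        · rw [hx, hzv]
          rfl
        · obtain ⟨w, rfl⟩ := hcov x hx
          have := congrFun h0 w
          rw [hT, adjoinMat_mulVec, hzv] at this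
          simpa using this
      · exfalso
        have hvα : v ∈ α := by
          by_contra hv'
          exact hzv (hz v hv')
        have hlt : β.card < r := by
          have := Finset.card_erase_lt_of_mem hvα
          omega
        refine hu β hlt ((z v)⁻¹ • (z ∘ e)) (fun w hw => by simp [hβz w hw]) ?_
        have hTz : u + (z v)⁻¹ • (z ∘ e) = (z v)⁻¹ • (T *ᵥ z) := by
          ext w
          rw [Pi.smul_apply, hT, adjoinMat_mulVec]
          simp only [Pi.add_apply, Pi.smul_apply, Function.comp_apply, smul_eq_mul]
          field_simp
          ring
        rw [hTz, Matrix.mulVec_smul, hAz, smul_zero]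
  obtain ⟨P, hP, hdiag, hadj⟩ := h _ hgp
  refine ⟨P.submatrix e e, hP.submatrix he, ?_, ?_⟩
  · intro i
    rw [Matrix.submatrix_apply, hdiag, ← Matrix.submatrix_apply (Tᵀ * A * T) e e, hsub]
  · intro i j hij
    rw [Matrix.submatrix_apply, hadj _ _ hij, ← Matrix.submatrix_apply (Tᵀ * A * T) e e, hsub]

/-! ### Positive definite completion at a vertex of small degree -/

/-- If the block of `A` indexed by `v` and the range of `f` is nonsingular, then its Schur
complement at `v` is positive. -/
lemma schur_pos {V N : Type*} [Fintype V] [DecidableEq V] [Fintype N] [DecidableEq N]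
    {A : Matrix V V ℝ} (hA : A.PosSemidef) {f : N → V} {v : V} (hv : ∀ n, f n ≠ v)
    (hker : ∀ z : V → ℝ, (∀ i, i ≠ v → (∀ n, f n ≠ i) → z i = 0) → A *ᵥ z = 0 → z = 0)
    {c : N → ℝ} (hc : A.submatrix f f *ᵥ c = fun n => A (f n) v) :
    c ⬝ᵥ (fun n => A (f n) v) < A v v := by
  have hsymm : ∀ i j, A i j = A j i := fun i j => by
    simpa using (hA.isHermitian.apply j i)
  set x := extMat f *ᵥ c with hx
  have hxx : x ⬝ᵥ (A *ᵥ x) = c ⬝ᵥ (fun n => A (f n) v) := by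
    rw [← hc, submatrix_eq_congr, congr_form]
  have hxv : x ⬝ᵥ (A *ᵥ Pi.single v 1) = c ⬝ᵥ (fun n => A (f n) v) := by
    rw [hx, ← Matrix.transpose_transpose (extMat f), Matrix.mulVec_transpose,
      ← Matrix.dotProduct_mulVec, transpose_extMat_mulVec]
    simp [Function.comp_def]
  have hvx : Pi.single v 1 ⬝ᵥ (A *ᵥ x) = c ⬝ᵥ (fun n => A (f n) v) := by
    have hAt : Aᵀ = A := by
      ext i j
      exact hsymm j i
    rw [← hxv, Matrix.dotProduct_mulVec, dotProduct_comm, ← Matrix.mulVec_transpose, hAt]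
  have hvv : Pi.single v 1 ⬝ᵥ (A *ᵥ Pi.single v 1) = A v v := (apply_eq_form A v v).symm
  have hform : (Pi.single v 1 - x) ⬝ᵥ (A *ᵥ (Pi.single v 1 - x)) =
      A v v - c ⬝ᵥ (fun n => A (f n) v) := by
    rw [Matrix.mulVec_sub, sub_dotProduct, dotProduct_sub, dotProduct_sub, hxx, hxv, hvx, hvv]
    ring
  have hne : A *ᵥ (Pi.single v 1 - x) ≠ 0 := by
    intro h0
    have := hker _ ?_ h0
    · have h1 := congrFun this v
      rw [Pi.sub_apply, hx, extMat_apply_of_notMem c hv] at h1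
      simp at h1
    · intro i hiv hi
      rw [Pi.sub_apply, hx, extMat_apply_of_notMem c hi]
      simp [hiv]
  have hnn := quad_nonneg hA (Pi.single v 1 - x)
  have hne' := mt (quad_eq_zero_iff hA _).1 hne
  have := lt_of_le_of_ne hnn (Ne.symm hne')
  rw [hform] at this
  linarith

/-- The Schur complement condition at `v` persists from a nonsingular `B₀` to the segment towards
`B₁`, near `B₀`. -/
lemma exists_small_perturbation {N : Type*} [Fintype N] [DecidableEq N] (B₀ B₁ : Matrix N N ℝ)
    (h₀ : B₀.det ≠ 0) (a : N → ℝ) {d : ℝ} (hd : (B₀⁻¹ *ᵥ a) ⬝ᵥ a < d) :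
    ∃ t : ℝ, 0 < t ∧ t < 1 ∧ (((1 - t) • B₀ + t • B₁)⁻¹ *ᵥ a) ⬝ᵥ a < d := by
  let B : ℝ → Matrix N N ℝ := fun t => (1 - t) • B₀ + t • B₁
  have hB0 : B 0 = B₀ := by simp [B]
  have hBc : Continuous B := by fun_prop
  have hcont : ContinuousAt (fun t => ((B t)⁻¹ *ᵥ a) ⬝ᵥ a) 0 := by
    have heq : (fun t => ((B t)⁻¹ *ᵥ a) ⬝ᵥ a) =
        fun t => ((B t).det)⁻¹ * (((B t).adjugate *ᵥ a) ⬝ᵥ a) := by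
      ext t
      rw [Matrix.inv_def, Ring.inverse_eq_inv', Matrix.smul_mulVec, smul_dotProduct, smul_eq_mul]
    rw [heq]
    refine ContinuousAt.mul (ContinuousAt.inv₀ hBc.matrix_det.continuousAt (by rwa [hB0])) ?_
    exact ((hBc.matrix_adjugate.matrix_mulVec continuous_const).dotProduct
      continuous_const).continuousAt
  have hev := hcont.eventually_lt (continuousAt_const (y := d)) (by simpa [hB0] using hd)
  obtain ⟨ε, hε, hball⟩ := Metric.eventually_nhds_iff.1 hev
  have hm : 0 < min ε 1 := lt_min hε one_pos
  refine ⟨min ε 1 / 2, by positivity, ?_, hball ?_⟩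
  · linarith [min_le_right ε 1]
  · rw [Real.dist_eq, sub_zero, abs_of_pos (by positivity)]
    linarith [min_le_left ε 1]

/-- A positive definite matrix on `W` extends to `W ∪ {v}` with prescribed column `M c` and
prescribed diagonal entry `d > cᵀ M c` at `v`. -/
lemma exists_posDef_adjoin {V W : Type*} [Fintype V] [DecidableEq V] [Fintype W] [DecidableEq W]
    {e : W → V} (he : e.Injective) {v : V} (hv : ∀ w, e w ≠ v)
    (hcov : ∀ x, x ≠ v → ∃ w, e w = x) {M : Matrix W W ℝ} (hM : M.PosDef) {c : W → ℝ} {d : ℝ}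
    (hd : c ⬝ᵥ (M *ᵥ c) < d) :
    ∃ P : Matrix V V ℝ, P.PosDef ∧ P v v = d ∧ (∀ w, P (e w) v = (M *ᵥ c) w) ∧
      ∀ w w', P (e w) (e w') = M w w' := by
  set T := adjoinMat e v c with hT
  set D : Matrix V V ℝ := Matrix.diagonal (Pi.single v (d - c ⬝ᵥ (M *ᵥ c))) with hD
  have hDpsd : D.PosSemidef := by
    refine Matrix.PosSemidef.diagonal fun i => ?_
    by_cases hi : i = v
    · subst hi
      simpa using hd.le
    · simp [hi]
  have hQ := posSemidef_congr hM.posSemidef T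
  refine ⟨Tᵀ * M * T + D, posDef_of_ker (hQ.add hDpsd) ?_, ?_, ?_, ?_⟩
  · intro z hz
    have hsum : z ⬝ᵥ ((Tᵀ * M * T) *ᵥ z) + z ⬝ᵥ (D *ᵥ z) = 0 := by
      rw [← dotProduct_add, ← Matrix.add_mulVec, hz, dotProduct_zero]
    have hD0 : D *ᵥ z = 0 := (quad_eq_zero_iff hDpsd z).1
      (by linarith [quad_nonneg hQ z, quad_nonneg hDpsd z])
    have hQ0 : (Tᵀ * M * T) *ᵥ z = 0 := (quad_eq_zero_iff hQ z).1
      (by linarith [quad_nonneg hQ z, quad_nonneg hDpsd z])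
    have hzv : z v = 0 := by
      have := congrFun hD0 v
      rw [hD, Matrix.mulVec_diagonal] at this
      simpa [(sub_pos.2 hd).ne'] using this
    have hTz : T *ᵥ z = 0 :=
      (det_ne_zero_iff_ker M).1 hM.det_pos.ne' _ ((congr_ker hM.posSemidef T z).1 hQ0)
    ext x
    by_cases hx : x = v
    · rw [hx, hzv]
      rfl
    · obtain ⟨w, rfl⟩ := hcov x hx
      have := congrFun hTz w
      rw [hT, adjoinMat_mulVec, hzv] at this
      simpa using this
  · rw [Matrix.add_apply, apply_eq_form (Tᵀ * M * T), congr_form, hT,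
      adjoinMat_single_self hv, hD]
    simp
  · intro w
    rw [Matrix.add_apply, apply_eq_form (Tᵀ * M * T), congr_form, hT,
      adjoinMat_single_self hv, adjoinMat_single he hv, hD, Matrix.diagonal_apply_ne _ (hv w)]
    simp
  · intro w w'
    have hDww : D (e w) (e w') = 0 := by
      rw [hD, Matrix.diagonal_apply]
      simp [hv w]
    rw [Matrix.add_apply, hDww, add_zero]
    exact congrFun (congrFun (adjoin_submatrix he hv c M) w) w'

lemma gRankProp_of_comap {V W : Type*} [Fintype V] [DecidableEq V] [Fintype W] [DecidableEq W]
    (G : SimpleGraph V) [DecidableRel G.Adj] {e : W → V} (he : e.Injective) {v : V}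
    (hv : ∀ w, e w ≠ v) (hcov : ∀ x, x ≠ v → ∃ w, e w = x) {r : ℕ} (hdeg : G.degree v + 1 ≤ r)
    (h : GRankProp (G.comap e) r) : GRankProp G r := by
  intro A hA
  by_cases hr : r ≤ Fintype.card W
  swap
  · -- Here `r = |V|`, so `A` itself is positive definite.
    refine ⟨A, posDef_of_ker hA.1 fun z hz =>
      hA.eq_zero_of_ker (α := Finset.univ) ?_ (by simp) hz, fun _ => rfl, fun _ _ _ => rfl⟩
    have hsub : (Finset.univ : Finset V) ⊆ insert v (Finset.univ.image e) := by
      intro x _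
      by_cases hx : x = v
      · simp [hx]
      · obtain ⟨w, rfl⟩ := hcov x hx
        simp
    have h1 := Finset.card_le_card hsub
    have h2 := Finset.card_insert_le v ((Finset.univ : Finset W).image e)
    have h3 := Finset.card_image_le (s := (Finset.univ : Finset W)) (f := e)
    rw [Finset.card_univ (α := W)] at h3
    omega
  obtain ⟨P', hP', hdiag, hadj⟩ := h _ (hA.submatrix he hr)
  have hsymm : ∀ i j, A i j = A j i := fun i j => by
    simpa using (hA.1.isHermitian.apply j i)
  let g : {w : W // G.Adj v (e w)} → W := Subtype.val
  have hg : g.Injective := Subtype.val_injective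
  let a : {w : W // G.Adj v (e w)} → ℝ := fun n => A (e (g n)) v
  have hker : ∀ z : V → ℝ, (∀ i, i ≠ v → (∀ n, e (g n) ≠ i) → z i = 0) → A *ᵥ z = 0 → z = 0 := by
    intro z hz hAz
    refine hA.eq_zero_of_ker (α := insert v (G.neighborFinset v))
      ((Finset.card_insert_le _ _).trans hdeg) (fun i hi => ?_) hAz
    rw [Finset.mem_insert, not_or, SimpleGraph.mem_neighborFinset] at hi
    exact hz i hi.1 (fun n hn => hi.2 (hn ▸ n.2))
  have hB₀ : (A.submatrix (e ∘ g) (e ∘ g)).det ≠ 0 := by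
    refine (det_ne_zero_iff_ker _).2 fun z hz => ?_
    have h0 := hker (extMat (e ∘ g) *ᵥ z) (fun i _ hi => extMat_apply_of_notMem z hi)
      ((submatrix_ker hA.1 _ _).1 hz)
    ext n
    rw [← extMat_apply (he.comp hg) z n, h0]
    rfl
  have hschur : ((A.submatrix (e ∘ g) (e ∘ g))⁻¹ *ᵥ a) ⬝ᵥ a < A v v := by
    refine schur_pos hA.1 (f := e ∘ g) (fun n => hv _) hker ?_
    rw [Matrix.mulVec_mulVec, Matrix.mul_nonsing_inv _ (isUnit_iff_ne_zero.2 hB₀),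
      Matrix.one_mulVec]
    rfl
  obtain ⟨t, ht0, ht1, ht⟩ := exists_small_perturbation _ (P'.submatrix g g) hB₀ a hschur
  set M : Matrix W W ℝ := (1 - t) • A.submatrix e e + t • P' with hMdef
  have hM : M.PosDef :=
    Matrix.PosDef.posSemidef_add ((hA.1.submatrix e).smul (by linarith)) (hP'.smul ht0)
  have hMg : M.submatrix g g =
      (1 - t) • A.submatrix (e ∘ g) (e ∘ g) + t • P'.submatrix g g := by
    ext i j
    simp [hMdef]
  rw [← hMg] at ht
  have hMgdet : (M.submatrix g g).det ≠ 0 := (hM.submatrix hg).det_pos.ne'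
  set c₀ := (M.submatrix g g)⁻¹ *ᵥ a with hc₀
  have hc₀a : M.submatrix g g *ᵥ c₀ = a := by
    rw [hc₀, Matrix.mulVec_mulVec, Matrix.mul_nonsing_inv _ (isUnit_iff_ne_zero.2 hMgdet),
      Matrix.one_mulVec]
  have hcol : ∀ n, (M *ᵥ (extMat g *ᵥ c₀)) (g n) = a n := by
    intro n
    rw [← hc₀a, submatrix_eq_congr, ← Matrix.mulVec_mulVec, ← Matrix.mulVec_mulVec,
      transpose_extMat_mulVec]
    rfl
  have hform : (extMat g *ᵥ c₀) ⬝ᵥ (M *ᵥ (extMat g *ᵥ c₀)) < A v v := by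
    rw [← congr_form, ← submatrix_eq_congr, hc₀a]
    exact ht
  obtain ⟨P, hP, hPvv, hPv, hPW⟩ := exists_posDef_adjoin he hv hcov hM hform
  have hPsymm : ∀ i j, P i j = P j i := fun i j => by
    simpa using (hP.isHermitian.apply j i)
  have hPadj : ∀ w, G.Adj v (e w) → P (e w) v = A (e w) v := fun w hw => by
    rw [hPv]
    exact hcol ⟨w, hw⟩
  refine ⟨P, hP, ?_, ?_⟩
  · intro i
    by_cases hi : i = v
    · rw [hi, hPvv]
    · obtain ⟨w, rfl⟩ := hcov i hi
      rw [hPW, hMdef, Matrix.add_apply, Matrix.smul_apply, Matrix.smul_apply, hdiag,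
        Matrix.submatrix_apply, smul_eq_mul, smul_eq_mul]
      ring
  · intro i j hij
    by_cases hi : i = v
    · subst hi
      obtain ⟨w, rfl⟩ := hcov j hij.ne'
      rw [hPsymm, hsymm]
      exact hPadj w hij
    · obtain ⟨w, rfl⟩ := hcov i hi
      by_cases hj : j = v
      · subst hj
        exact hPadj w hij.symm
      · obtain ⟨w', rfl⟩ := hcov j hj
        rw [hPW, hMdef, Matrix.add_apply, Matrix.smul_apply, Matrix.smul_apply,
          hadj w w' hij, Matrix.submatrix_apply, smul_eq_mul, smul_eq_mul]
        ring

/-- If `r(G − v) ≥ deg_G(v) + 1`, then `r(G) = r(G − v)`. -/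
theorem gaussianRank_deleteVertex_of_le_degree {V : Type*} [Fintype V] [DecidableEq V]
    (G : SimpleGraph V) [DecidableRel G.Adj] (v : V)
    (h : G.degree v + 1 ≤ gaussianRank (G.induce ((({v}ᶜ : Finset V) : Finset V) : Set V))) :
    gaussianRank G = gaussianRank (G.induce ((({v}ᶜ : Finset V) : Finset V) : Set V)) := by
  have he : Function.Injective
      (Subtype.val : ((({v}ᶜ : Finset V) : Finset V) : Set V) → V) := Subtype.val_injective
  have hv : ∀ w : ((({v}ᶜ : Finset V) : Finset V) : Set V), (w : V) ≠ v := fun w => by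
    simpa using w.2
  have hcov : ∀ x, x ≠ v → ∃ w : ((({v}ᶜ : Finset V) : Finset V) : Set V), (w : V) = x :=
    fun x hx => ⟨⟨x, by simpa using hx⟩, rfl⟩
  -- `sInf ∅ = 0`, so a positive infimum is attained.
  have hne : {r : ℕ | 0 < r ∧
      GRankProp (G.induce ((({v}ᶜ : Finset V) : Finset V) : Set V)) r}.Nonempty :=
    Nat.nonempty_of_pos_sInf ((Nat.succ_pos _).trans_le h)
  obtain ⟨hpos, hprop⟩ := Nat.sInf_mem hne
  have hG : GRankProp G (gaussianRank (G.induce ((({v}ᶜ : Finset V) : Finset V) : Set V))) :=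
    gRankProp_of_comap G he hv hcov h hprop
  refine le_antisymm (Nat.sInf_le ⟨hpos, hG⟩) ?_
  obtain ⟨hpos', hprop'⟩ := Nat.sInf_mem
    (s := {r : ℕ | 0 < r ∧ GRankProp G r}) ⟨_, hpos, hG⟩
  exact Nat.sInf_le ⟨hpos', gRankProp_comap G he hv hcov hprop'⟩
end

section
/- Let G be a finite simple graph and v a vertex of G, and let G−v denote the induced subgraph of G on the remaining vertices. Then r(G−v) ≤ r(G) ≤ r(G−v) + 1, where r denotes the Gaussian rank. -/
/-!
A positive semidefinite matrix of rank `d` in general position is the same thing as the Gram matrix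
of a family of vectors spanning a `d`-dimensional inner product space, any `d` of which are linearly
independent (`InGenPos.exists_gram`, `inGenPos_gram`). Both inequalities are operations on such
families.

* `r(G − v) ≤ r(G)` (`GRankProp.comap`): extend a family indexed by `G − v` by a vector at `v` that
  lies in none of the spans of fewer than `d` members; finitely many proper subspaces do not cover
  the space. A positive definite completion of the extended Gram matrix on `G` restricts to `G − v`.
* `r(G) ≤ r(G − v) + 1` (`GRankProp.of_comap`): project a family of rank `r + 1` indexed by `G` onto
  the orthogonal complement of the vector at `v`. Its Gram matrix is the Schur complement of the
  `(v, v)` entry, has rank `r`, and is in general position. A positive definite completion of it on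
  `G − v` gives one of the original matrix on `G` by reversing the Schur complement
  (`exists_posDef_bordered`).

The deleted graph appears as `G.comap f` for an injection `f` with range `{v}ᶜ`.
-/

open Matrix MeasureTheory

/-- A matrix in general position of rank `d` is the Gram matrix of vectors in a `d`-dimensional
space, any `d` of which are linearly independent: factor `A = Bᴴ B` and use the columns of `B`
in their span. The converse is `inGenPos_gram`. -/
lemma InGenPos.exists_gram {V : Type*} [Fintype V] [DecidableEq V] {A : Matrix V V ℝ} {d : ℕ}
    (hA : InGenPos A d) :
    d ≤ Fintype.card V ∧ ∃ E : Submodule ℝ (EuclideanSpace ℝ V), Module.finrank ℝ E = d ∧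
      ∃ x : V → E, gram ℝ x = A ∧
        ∀ α : Finset V, α.card = d → LinearIndepOn ℝ x (α : Set V) := by
  obtain ⟨hpsd, hrank, hdet⟩ := hA
  obtain ⟨B, hB⟩ : ∃ B : Matrix V V ℝ, A = Bᴴ * B := by
    open scoped MatrixOrder in
    exact CStarAlgebra.nonneg_iff_eq_star_mul_self.mp hpsd.nonneg
  let e : EuclideanSpace ℝ V ≃ₗ[ℝ] (V → ℝ) := WithLp.linearEquiv 2 ℝ (V → ℝ)
  let S : Submodule ℝ (V → ℝ) := Submodule.span ℝ (Set.range B.col)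
  have hmem (u : V) : e.symm (B.col u) ∈ S.map (e.symm : (V → ℝ) →ₗ[ℝ] EuclideanSpace ℝ V) :=
    Submodule.mem_map_of_mem (Submodule.subset_span ⟨u, rfl⟩)
  let x : V → S.map (e.symm : (V → ℝ) →ₗ[ℝ] EuclideanSpace ℝ V) := fun u ↦ ⟨_, hmem u⟩
  have hx : gram ℝ x = A := by
    ext i j
    rw [hB]
    simp [x, e, Submodule.coe_inner, PiLp.inner_apply, mul_apply, mul_comm]
  refine ⟨hrank ▸ rank_le_card_width A, _, ?_, x, hx, fun α hα ↦ ?_⟩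
  · rw [LinearEquiv.finrank_map_eq, ← rank_eq_finrank_span_cols,
      ← rank_conjTranspose_mul_self, ← hB, hrank]
  · have h := hdet α hα
    rw [← hx] at h
    exact linearIndependent_of_det_gram_ne_zero (v := fun i : α ↦ x i) h

lemma inGenPos_gram {V E : Type*} [Fintype V] [DecidableEq V] [NormedAddCommGroup E]
    [InnerProductSpace ℝ E] [FiniteDimensional ℝ E] {d : ℕ} (hE : Module.finrank ℝ E = d)
    (hd : d ≤ Fintype.card V) (x : V → E)
    (hx : ∀ α : Finset V, α.card = d → LinearIndepOn ℝ x (α : Set V)) :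
    InGenPos (gram ℝ x) d := by
  have hdet (α : Finset V) (hα : α.card = d) :
      ((gram ℝ x).submatrix (fun i : α ↦ (i : V)) (fun i : α ↦ (i : V))).det ≠ 0 :=
    det_gram_ne_zero_iff_linearIndependent (𝕜 := ℝ) (v := fun i : α ↦ x i) |>.mpr (hx α hα)
  refine ⟨posSemidef_gram ℝ x, le_antisymm ?_ ?_, hdet⟩
  · rw [gram_eq_conjTranspose_mul (stdOrthonormalBasis ℝ E) x]
    refine (rank_mul_le_right _ _).trans ((rank_le_card_height _).trans ?_)
    simp [hE]
  · obtain ⟨α, -, hα⟩ := Finset.exists_subset_card_eq (s := (Finset.univ : Finset V)) (n := d)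
      (by simpa using hd)
    have h := rank_of_isUnit _ ((isUnit_iff_isUnit_det _).mpr (hdet α hα).isUnit)
    rw [Fintype.card_coe, hα] at h
    exact h.symm.trans_le (rank_submatrix_le _ _ _)

/-- A vector avoiding the span of any fewer than `dim E` members of a finite family. -/
lemma exists_notMem_span {W E : Type*} [Finite W] [AddCommGroup E] [Module ℝ E]
    [FiniteDimensional ℝ E] (x : W → E) :
    ∃ y : E, ∀ β : Finset W, β.card < Module.finrank ℝ E →
      y ∉ Submodule.span ℝ (x '' (β : Set W)) := by
  classical
  by_contra! h
  have hcov : ⋃ β : {β : Finset W // β.card < Module.finrank ℝ E},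
      (Submodule.span ℝ (x '' (β.1 : Set W)) : Set E) = Set.univ := by
    refine Set.eq_univ_of_forall fun y ↦ ?_
    obtain ⟨β, hβ, hy⟩ := h y
    exact Set.mem_iUnion.mpr ⟨⟨β, hβ⟩, hy⟩
  obtain ⟨⟨β, hβ⟩, htop⟩ := Subspace.exists_eq_top_of_iUnion_eq_univ hcov
  have h1 := finrank_span_finset_le_card (R := ℝ) (β.image x)
  rw [Set.finrank, Finset.coe_image, htop, finrank_top] at h1
  exact absurd (h1.trans Finset.card_image_le) (not_le.mpr hβ)

/-- Any general position family indexed by `G − v` extends to one indexed by `G`, in the same space,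
by a generic vector at `v`; a positive definite completion on `G` then restricts to `G − v`. -/
lemma GRankProp.comap {V W : Type*} [Fintype V] [DecidableEq V] [Fintype W] [DecidableEq W]
    {G : SimpleGraph V} {v : V} {f : W → V} (hf : f.Injective) (hv : Set.range f = {v}ᶜ)
    {r : ℕ} (h : GRankProp G r) : GRankProp (G.comap f) r := by
  intro A hA
  obtain ⟨hd, E, hE, x, rfl, hx⟩ := hA.exists_gram
  obtain ⟨y, hy⟩ := exists_notMem_span x
  have hfv (w : W) : f w ≠ v := by simpa using hv.subset ⟨w, rfl⟩
  let X : V → E := Function.extend f x fun _ ↦ y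
  have hXf : X ∘ f = x := funext fun w ↦ hf.extend_apply x (fun _ ↦ y) w
  have hXv : X v = y := Function.extend_apply' _ _ _ fun ⟨w, hw⟩ ↦ hfv w hw
  have hindep (β : Finset W) (hβ : β.card ≤ r) : LinearIndepOn ℝ X (f '' (β : Set W)) := by
    obtain ⟨γ, hβγ, hγ⟩ := Finset.exists_superset_card_eq hβ hd
    refine LinearIndepOn.image_of_comp f X ?_
    rw [hXf]
    exact (hx γ hγ).mono (by exact_mod_cast hβγ)
  have hcard : r ≤ Fintype.card V := hd.trans (Fintype.card_le_of_injective f hf)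
  obtain ⟨P, hP, hdiag, hadj⟩ := h _ <| inGenPos_gram hE hcard X fun α hα ↦ by
    let β : Finset W := Finset.univ.filter fun w ↦ f w ∈ α
    have himg : f '' (β : Set W) = (α : Set V) \ {v} := by
      ext u
      constructor
      · rintro ⟨w, hw, rfl⟩
        exact ⟨by simpa [β] using hw, hfv w⟩
      · rintro ⟨hu, huv⟩
        obtain ⟨w, rfl⟩ : u ∈ Set.range f := hv.symm ▸ huv
        exact ⟨w, by simpa [β] using hu, rfl⟩
    have hβ : β.card = (α.erase v).card := by
      rw [← Finset.card_image_of_injective β hf]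
      congr 1
      exact_mod_cast (by simpa using himg : ((β.image f : Finset V) : Set V) = (α.erase v : Finset V))
    by_cases hvα : v ∈ α
    · have hlt : β.card < r := by
        rw [hβ, ← hα]
        exact Finset.card_erase_lt_of_mem hvα
      have := (hindep β hlt.le).insert (x := v) (by
        rw [← Set.image_comp, hXf, hXv]
        exact hy β (hE.symm ▸ hlt))
      rwa [himg, Set.insert_sdiff_singleton, Set.insert_eq_of_mem (by exact_mod_cast hvα)] at this
    · have := hindep β (by rw [hβ, Finset.erase_eq_of_notMem hvα, hα])
      rwa [himg, Set.sdiff_singleton_eq_self (by exact_mod_cast hvα)] at this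
  refine ⟨P.submatrix f f, hP.submatrix hf, fun i ↦ ?_, fun i j hij ↦ ?_⟩
  · have := hdiag (f i)
    simpa [gram_apply, ← hXf] using this
  · have := hadj (f i) (f j) hij
    simpa [gram_apply, ← hXf] using this

/-- Inner products of the projections of `a` and `b` orthogonally to `z`. -/
lemma inner_orthogonalProjection_singleton {E : Type*} [NormedAddCommGroup E]
    [InnerProductSpace ℝ E] (z a b : E) :
    inner ℝ ((ℝ ∙ z)ᗮ.orthogonalProjectionOnto a) ((ℝ ∙ z)ᗮ.orthogonalProjectionOnto b) =
      inner ℝ a b - inner ℝ a z * inner ℝ z b / inner ℝ z z := by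
  rw [Submodule.inner_orthogonalProjectionOnto_eq_of_mem_left,
    Submodule.coe_orthogonalProjectionOnto_apply, Submodule.starProjection_orthogonal_val,
    Submodule.starProjection_singleton, inner_sub_left,
    inner_smul_left, real_inner_self_eq_norm_sq]
  simp [real_inner_comm]
  ring

/-- A positive definite matrix indexed by all vertices but `v`, extended by zero, becomes positive
definite after adding the rank-one matrix `c cᵀ / a` with `a > 0` and `c v ≠ 0`. -/
lemma exists_posDef_bordered {V W : Type*} [Fintype V] [Fintype W] [DecidableEq V]
    [DecidableEq W] {v : V} {f : W → V} (hf : f.Injective) (hv : Set.range f = {v}ᶜ)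
    {P : Matrix W W ℝ} (hP : P.PosDef) (c : V → ℝ) {a : ℝ}
    (ha : 0 < a) (hc : c v ≠ 0) :
    ∃ Q : Matrix V V ℝ, Q.PosDef ∧ (∀ i j, Q (f i) (f j) = P i j + c (f i) * c (f j) / a) ∧
      (∀ u, Q u v = c u * c v / a) ∧ ∀ u, Q v u = c v * c u / a := by
  have hfv (w : W) : f w ≠ v := by simpa using hv.subset ⟨w, rfl⟩
  let B : Matrix W V ℝ := (1 : Matrix V V ℝ).submatrix f id
  have hBf (i j : W) : B i (f j) = if i = j then 1 else 0 := by
    simp [B, one_apply, hf.eq_iff]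
  have hBv (i : W) : B i v = 0 := by
    simp [B, one_apply, hfv]
  have hB (z : V → ℝ) : B *ᵥ z = z ∘ f := by
    ext w
    simp [B, mulVec, dotProduct, one_apply]
  refine ⟨Bᴴ * P * B + a⁻¹ • vecMulVec c c, ?_, fun i j ↦ ?_, fun u ↦ ?_, fun u ↦ ?_⟩
  · have h1 : (Bᴴ * P * B).PosSemidef := hP.posSemidef.conjTranspose_mul_mul_same B
    have h2 : (a⁻¹ • vecMulVec c c).PosSemidef := by
      have := posSemidef_vecMulVec_self_star c
      rw [star_trivial] at this
      exact this.smul (inv_nonneg.mpr ha.le)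
    refine .of_dotProduct_mulVec_pos (h1.add h2).isHermitian fun z hz ↦ ?_
    have hq : star z ⬝ᵥ (Bᴴ * P * B + a⁻¹ • vecMulVec c c) *ᵥ z =
        star (z ∘ f) ⬝ᵥ P *ᵥ (z ∘ f) + a⁻¹ * (c ⬝ᵥ z) ^ 2 := by
      rw [add_mulVec, dotProduct_add, ← mulVec_mulVec, ← mulVec_mulVec, hB, dotProduct_mulVec,
        vecMul_conjTranspose, star_star, hB, smul_mulVec, dotProduct_smul, vecMulVec_mulVec]
      simp only [star_trivial, op_smul_eq_smul, dotProduct_smul, smul_eq_mul,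
        dotProduct_comm z c]
      ring
    rw [hq]
    by_cases hzf : z ∘ f = 0
    · have hz0 (u : V) (hu : u ≠ v) : z u = 0 := by
        obtain ⟨w, rfl⟩ : u ∈ Set.range f := hv.symm ▸ hu
        exact congrFun hzf w
      have hzv : z v ≠ 0 := fun h0 ↦ hz <| funext fun u ↦ by
        by_cases hu : u = v
        · rw [hu, h0]; rfl
        · exact hz0 u hu
      have hcz : c ⬝ᵥ z = c v * z v :=
        Finset.sum_eq_single v (fun u _ hu ↦ by simp [hz0 u hu]) (by simp)
      rw [hzf, hcz]
      simp only [mulVec_zero, dotProduct_zero, zero_add]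
      positivity
    · have := hP.dotProduct_mulVec_pos hzf
      positivity
  · simp [mul_apply, hBf, vecMulVec_apply]
    ring
  · simp [mul_apply, hBv, vecMulVec_apply]
    ring
  · simp [mul_apply, hBv, vecMulVec_apply]
    ring

/-- Projecting a general position family indexed by `G` orthogonally to its vector at `v` (a Schur
complement at the level of Gram matrices) drops the rank by one and keeps general position; a
positive definite completion on `G − v` is then lifted back to `G`. -/
lemma GRankProp.of_comap {V W : Type*} [Fintype V] [DecidableEq V] [Fintype W] [DecidableEq W]
    {G : SimpleGraph V} {v : V} {f : W → V} (hf : f.Injective) (hv : Set.range f = {v}ᶜ)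
    {r : ℕ} (h : GRankProp (G.comap f) r) : GRankProp G (r + 1) := by
  intro A hA
  obtain ⟨hd, E, hE, x, rfl, hx⟩ := hA.exists_gram
  have hfv (w : W) : f w ≠ v := by simpa using hv.subset ⟨w, rfl⟩
  have hxv : x v ≠ 0 := by
    obtain ⟨α, hvα, hα⟩ := Finset.exists_superset_card_eq (s := {v}) (n := r + 1) (by simp) hd
    exact (hx α hα).ne_zero (by simpa using hvα)
  have hcard : r ≤ Fintype.card W := by
    have h1 : (Finset.univ.image f) = {v}ᶜ := by
      exact_mod_cast (by simpa using hv :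
        ((Finset.univ.image f : Finset V) : Set V) = ({v}ᶜ : Finset V))
    have h2 := congrArg Finset.card h1
    rw [Finset.card_image_of_injective _ hf, Finset.card_compl, Finset.card_singleton,
      Finset.card_univ] at h2
    omega
  let K : Submodule ℝ E := (ℝ ∙ x v)ᗮ
  let π : E →ₗ[ℝ] K := K.orthogonalProjectionOnto
  have hK : Module.finrank ℝ K = r := by
    have : Fact (Module.finrank ℝ E = r + 1) := ⟨hE⟩
    exact Submodule.finrank_orthogonal_span_singleton hxv
  have hker : LinearMap.ker π = ℝ ∙ x v := by
    have := Submodule.ker_orthogonalProjectionOnto (K := K)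
    rwa [Submodule.orthogonal_orthogonal] at this
  obtain ⟨P, hP, hdiag, hadj⟩ := h _ <| inGenPos_gram hK hcard (fun w ↦ π (x (f w))) fun β hβ ↦ by
    have hvβ : v ∉ f '' (β : Set W) := fun ⟨w, _, hw⟩ ↦ hfv w hw
    -- `r` vectors together with `x v` are independent, so the span of those `r` meets the kernel
    -- `ℝ ∙ x v` of the projection trivially.
    have hins := hx (insert v (β.image f)) (by
      rw [Finset.card_insert_of_notMem (by exact_mod_cast hvβ),
        Finset.card_image_of_injective _ hf, hβ])
    rw [Finset.coe_insert, Finset.coe_image, linearIndepOn_insert hvβ, ← Set.image_comp] at hins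
    refine LinearIndependent.map (v := fun w : (β : Set W) ↦ x (f w)) (f := π)
      (hins.1.comp_of_image hf.injOn) ?_
    rw [hker, Submodule.disjoint_span_singleton' hxv]
    exact fun hmem ↦ hins.2 (by rwa [Set.image_eq_range])
  have ha : 0 < inner ℝ (x v) (x v) := real_inner_self_pos.mpr hxv
  -- Adding `A_{iv} A_{jv} / A_{vv}` undoes the Schur complement.
  obtain ⟨Q, hQ, hQf, hQr, hQl⟩ :=
    exists_posDef_bordered hf hv hP (fun u ↦ inner ℝ (x u) (x v)) ha ha.ne'
  have hπ (i j : W) : inner ℝ (π (x (f i))) (π (x (f j))) +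
      inner ℝ (x (f i)) (x v) * inner ℝ (x (f j)) (x v) / inner ℝ (x v) (x v) =
      inner ℝ (x (f i)) (x (f j)) := by
    have := inner_orthogonalProjection_singleton (x v) (x (f i)) (x (f j))
    rw [real_inner_comm (x (f j)) (x v)] at this
    exact eq_sub_iff_add_eq.mp this
  have hcases (u : V) : u = v ∨ ∃ w, f w = u := by
    by_cases hu : u = v
    · exact .inl hu
    · exact .inr (hv.symm ▸ hu : u ∈ Set.range f)
  refine ⟨Q, hQ, fun u ↦ ?_, fun s t hst ↦ ?_⟩
  · obtain rfl | ⟨w, rfl⟩ := hcases u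
    · rw [hQr, gram_apply, mul_div_cancel_right₀ _ ha.ne']
    · rw [hQf, hdiag, gram_apply, hπ, gram_apply]
  · obtain rfl | ⟨i, rfl⟩ := hcases s
    · rw [hQl, gram_apply, mul_div_cancel_left₀ _ ha.ne', real_inner_comm]
    · obtain rfl | ⟨j, rfl⟩ := hcases t
      · rw [hQr, gram_apply, mul_div_cancel_right₀ _ ha.ne']
      · rw [hQf, hadj i j hst, gram_apply, hπ, gram_apply]

/-- Beyond the number of vertices no matrix has rank `r`, so the condition is vacuous. -/
lemma exists_gRankProp {V : Type*} [Fintype V] [DecidableEq V] (G : SimpleGraph V) :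
    {r : ℕ | 0 < r ∧ GRankProp G r}.Nonempty :=
  ⟨Fintype.card V + 1, Nat.succ_pos _, fun A hA ↦ by
    have := rank_le_card_width A
    have := hA.2.1
    omega⟩

/-- For a vertex `v` of `G`, `r(G − v) ≤ r(G) ≤ r(G − v) + 1`. -/
theorem gaussianRank_deleteVertex_bounds {V : Type*} [Fintype V] [DecidableEq V]
    (G : SimpleGraph V) (v : V) :
    gaussianRank (G.induce ((({v}ᶜ : Finset V) : Finset V) : Set V)) ≤ gaussianRank G ∧
      gaussianRank G ≤
        gaussianRank (G.induce ((({v}ᶜ : Finset V) : Finset V) : Set V)) + 1 := by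
  have hv : Set.range (Subtype.val : ((({v}ᶜ : Finset V) : Finset V) : Set V) → V) = {v}ᶜ := by
    ext u
    simp
  constructor
  · obtain ⟨hpos, h⟩ := Nat.sInf_mem (exists_gRankProp G)
    exact Nat.sInf_le ⟨hpos, h.comap Subtype.val_injective hv⟩
  · obtain ⟨-, h⟩ := Nat.sInf_mem
      (exists_gRankProp (G.induce ((({v}ᶜ : Finset V) : Finset V) : Set V)))
    exact Nat.sInf_le ⟨Nat.succ_pos _, GRankProp.of_comap Subtype.val_injective hv h⟩
end

section
/- Let G be a finite simple graph on at least two vertices and v a vertex of G that is adjacent to all other vertices of G, and let G−v denote the induced subgraph of G on the remaining vertices. Then r(G) = r(G−v) + 1, where r denotes the Gaussian rank. -/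
/-!
Write `W` for the vertices other than `v`, so that the vertex set of `G` is `Option W` with `v` in
the role of `none`. A symmetric matrix `A` on `Option W` with corner `c > 0` and border `b` is
determined by `c`, `b` and its Schur complement `S = A_WW - b bᵀ / c`; it is called `bord c b S`
below. Completing the square gives
`xᵀ A x = yᵀ S y + c (x_v + b ⬝ y / c)²`, where `y` is the restriction of `x` to `W`. Hence `A` is
positive (semi)definite iff `S` is, `y ↦ (-b ⬝ y / c, y)` identifies `ker S` with `ker A`, and
`rank A = rank S + 1`.

General position of a positive semidefinite matrix of rank `d` says that no nonzero kernel vector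
is supported on `d` indices, so it passes from `A` at level `d + 1` to `S` at level `d`.
It passes back provided the border avoids finitely many hyperplanes. Indeed, for a set `β` of
`d + 1` indices, the kernel vectors of `S` supported on `β` form a space of dimension at most one
(subtracting multiples kills a coordinate), and `b` must not be orthogonal to this line.

Since a positive definite completion may be computed on Schur complements as soon as all edges at
`v` are present, `G` has the Gaussian rank property at level `d + 1` iff `G - v` has it at level
`d`, for every `d ≥ 0`. The property fails at level `0` on a nonempty graph, because the zero matrix
has no positive definite match, and holds at level `card W` for `G - v`. So both infima are attained
and differ by exactly one.
-/

open Matrix MeasureTheory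

/-! ### General position in terms of the kernel -/

/-- General position means that no nonzero kernel vector is supported on `d` indices. -/
lemma inGenPos_iff {V : Type*} [Fintype V] [DecidableEq V] (A : Matrix V V ℝ) (d : ℕ) :
    InGenPos A d ↔ A.PosSemidef ∧ A.rank = d ∧
      ∀ α : Finset V, α.card = d → ∀ x : V → ℝ, (∀ i ∉ α, x i = 0) → A *ᵥ x = 0 → x = 0 := by
  unfold InGenPos
  refine and_congr_right fun hA => and_congr_right fun _ => forall₂_congr fun α _ => ?_
  have hsum : ∀ x : V → ℝ, (∀ i ∉ α, x i = 0) → ∀ g : V → ℝ,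
      ∑ j, g j * x j = ∑ j : α, g j * x j := by
    intro x hx g
    rw [Finset.sum_coe_sort α (fun j => g j * x j)]
    refine (Finset.sum_subset (Finset.subset_univ _) fun i _ hi => ?_).symm
    rw [hx i hi, mul_zero]
  constructor
  · intro hdet x hx hAx
    by_contra hne
    refine hdet (Matrix.exists_mulVec_eq_zero_iff.mp ⟨fun i : α => x i, ?_, ?_⟩)
    · intro h0
      refine hne (funext fun i => ?_)
      by_cases hi : i ∈ α
      · exact congrFun h0 ⟨i, hi⟩
      · exact hx i hi
    · funext i
      have h := congrFun hAx i
      simp only [mulVec, dotProduct] at h ⊢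
      rw [hsum x hx] at h
      exact h
  · intro h hdet
    obtain ⟨y, hy, hy0⟩ := Matrix.exists_mulVec_eq_zero_iff.mpr hdet
    let x : V → ℝ := fun i => if hi : i ∈ α then y ⟨i, hi⟩ else 0
    have hxy : ∀ i : α, x i = y i := fun i => by simp [x]
    have hx : ∀ i ∉ α, x i = 0 := fun i hi => by simp [x, hi]
    have hAx : ∀ i : α, (A *ᵥ x) i = 0 := by
      intro i
      have h := congrFun hy0 i
      simp only [mulVec, dotProduct] at h ⊢
      rw [hsum x hx]
      simpa [hxy] using h
    -- `x` is only known to be killed by the rows in `α`; semidefiniteness gives the other rows.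
    have hker : A *ᵥ x = 0 := by
      rw [← hA.dotProduct_mulVec_zero_iff]
      refine Finset.sum_eq_zero fun i _ => ?_
      by_cases hi : i ∈ α
      · rw [hAx ⟨i, hi⟩, mul_zero]
      · simp [hx i hi]
    have := h x hx hker
    exact hy (funext fun i => by rw [← hxy, this]; rfl)

/-! ### Bordered matrices -/

section Bordered

variable {W : Type*}

/-- The symmetric matrix on `Option W` with corner entry `c`, border `b`, and Schur complement `S`
with respect to the corner (for `c ≠ 0`). -/
noncomputable def bord (c : ℝ) (b : W → ℝ) (S : Matrix W W ℝ) : Matrix (Option W) (Option W) ℝ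
  | none, none => c
  | none, some j => b j
  | some i, none => b i
  | some i, some j => S i j + b i * b j / c

lemma exists_eq_bord (A : Matrix (Option W) (Option W) ℝ) (hA : A.IsHermitian) :
    ∃ S, A = bord (A none none) (fun j => A none (some j)) S := by
  refine ⟨fun i j => A (some i) (some j) - A none (some i) * A none (some j) / A none none, ?_⟩
  ext i j
  rcases i with _ | i <;> rcases j with _ | j <;> simp only [bord]
  · have := hA.apply none (some i)
    simpa using this
  · ring

lemma bord_isHermitian_iff (c : ℝ) (b : W → ℝ) (S : Matrix W W ℝ) :
    (bord c b S).IsHermitian ↔ S.IsHermitian := by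
  constructor
  · intro h
    refine Matrix.IsHermitian.ext fun i j => ?_
    have := h.apply (some i) (some j)
    simp only [bord, star_trivial] at this ⊢
    rw [mul_comm (b j)] at this
    linarith
  · intro h
    refine Matrix.IsHermitian.ext fun i j => ?_
    rcases i with _ | i <;> rcases j with _ | j <;> simp only [bord, star_trivial]
    have := h.apply i j
    rw [star_trivial] at this
    rw [this, mul_comm (b j)]

variable [Fintype W]

lemma bord_mulVec_none (c : ℝ) (b : W → ℝ) (S : Matrix W W ℝ) (x : Option W → ℝ) :
    (bord c b S *ᵥ x) none = c * x none + b ⬝ᵥ (fun j => x (some j)) := by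
  simp [mulVec, dotProduct, bord, Fintype.sum_option]

lemma bord_mulVec_some {c : ℝ} (hc : c ≠ 0) (b : W → ℝ) (S : Matrix W W ℝ) (x : Option W → ℝ)
    (i : W) : (bord c b S *ᵥ x) (some i) =
      (S *ᵥ (fun j => x (some j))) i + b i / c * (bord c b S *ᵥ x) none := by
  rw [bord_mulVec_none]
  simp only [mulVec, dotProduct, bord, Fintype.sum_option, add_mul, Finset.sum_add_distrib,
    mul_add, Finset.mul_sum]
  rw [Finset.sum_congr rfl fun j _ =>
    show b i * b j / c * x (some j) = b i / c * (b j * x (some j)) by ring]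
  field_simp
  ring

/-- Completing the square. -/
lemma bord_quad {c : ℝ} (hc : c ≠ 0) (b : W → ℝ) (S : Matrix W W ℝ) (x : Option W → ℝ) :
    x ⬝ᵥ (bord c b S *ᵥ x) = (fun j => x (some j)) ⬝ᵥ (S *ᵥ (fun j => x (some j))) +
      (c * x none + b ⬝ᵥ (fun j => x (some j))) ^ 2 / c := by
  have h1 : x ⬝ᵥ (bord c b S *ᵥ x) = x none * (bord c b S *ᵥ x) none +
      ∑ i, x (some i) * (bord c b S *ᵥ x) (some i) := Fintype.sum_option _
  simp only [h1, bord_mulVec_some hc, mul_add, Finset.sum_add_distrib]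
  rw [Finset.sum_congr rfl fun i _ => show x (some i) * (b i / c * (bord c b S *ᵥ x) none) =
    (bord c b S *ᵥ x) none / c * (b i * x (some i)) by ring, ← Finset.mul_sum, bord_mulVec_none]
  simp only [dotProduct]
  field_simp
  ring

lemma bord_mulVec_eq_zero_iff {c : ℝ} (hc : c ≠ 0) (b : W → ℝ) (S : Matrix W W ℝ)
    (x : Option W → ℝ) : bord c b S *ᵥ x = 0 ↔
      c * x none + b ⬝ᵥ (fun j => x (some j)) = 0 ∧ S *ᵥ (fun j => x (some j)) = 0 := by
  constructor
  · intro h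
    have h0 := congrFun h none
    refine ⟨by rw [← bord_mulVec_none c b S]; exact h0, funext fun i => ?_⟩
    have := congrFun h (some i)
    rw [bord_mulVec_some hc, h0] at this
    simpa using this
  · rintro ⟨h0, h1⟩
    rw [← bord_mulVec_none c b S] at h0
    funext i
    cases i with
    | none => exact h0
    | some i => rw [bord_mulVec_some hc, h0, h1]; simp

/-- The vector on `Option W` extending `y` that is killed by the `none` row of `bord c b S`. -/
noncomputable def lift (c : ℝ) (b y : W → ℝ) : Option W → ℝ := fun o => o.elim (-(b ⬝ᵥ y) / c) y

lemma lift_none {c : ℝ} (hc : c ≠ 0) (b y : W → ℝ) :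
    c * lift c b y none + b ⬝ᵥ (fun j => lift c b y (some j)) = 0 := by
  simp only [lift, Option.elim]
  field_simp
  ring

lemma bord_posSemidef_iff {c : ℝ} (hc : 0 < c) (b : W → ℝ) (S : Matrix W W ℝ) :
    (bord c b S).PosSemidef ↔ S.PosSemidef := by
  simp only [posSemidef_iff_dotProduct_mulVec, bord_isHermitian_iff, star_trivial]
  refine and_congr_right fun _ => ⟨fun h y => ?_, fun h x => ?_⟩
  · have := h (lift c b y)
    rw [bord_quad hc.ne', lift_none hc.ne'] at this
    simpa [lift] using this
  · rw [bord_quad hc.ne']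
    have := h (fun j => x (some j))
    positivity

lemma bord_posDef_iff {c : ℝ} (hc : 0 < c) (b : W → ℝ) (S : Matrix W W ℝ) :
    (bord c b S).PosDef ↔ S.PosDef := by
  simp only [posDef_iff_dotProduct_mulVec, bord_isHermitian_iff, star_trivial]
  refine and_congr_right fun _ => ⟨fun h y hy => ?_, fun h x hx => ?_⟩
  · have := @h (lift c b y) fun h0 => hy (funext fun j => congrFun h0 (some j))
    rw [bord_quad hc.ne', lift_none hc.ne'] at this
    simpa [lift] using this
  · rw [bord_quad hc.ne']
    by_cases hy : (fun j => x (some j)) = 0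
    · have h0 : x none ≠ 0 := fun h0 => hx (funext fun o => by
        cases o with
        | none => exact h0
        | some j => exact congrFun hy j)
      rw [hy]
      simp only [mulVec_zero, dotProduct_zero, zero_add, add_zero]
      positivity
    · have := h hy
      positivity

lemma rank_bord {c : ℝ} (hc : c ≠ 0) (b : W → ℝ) (S : Matrix W W ℝ) :
    (bord c b S).rank = S.rank + 1 := by
  let e : LinearMap.ker (bord c b S).mulVecLin ≃ₗ[ℝ] LinearMap.ker S.mulVecLin :=
    { toFun := fun x => ⟨fun j => x.1 (some j), ((bord_mulVec_eq_zero_iff hc b S x.1).1 x.2).2⟩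
      map_add' := fun _ _ => rfl
      map_smul' := fun _ _ => rfl
      invFun := fun y => ⟨lift c b y.1,
        (bord_mulVec_eq_zero_iff hc b S _).2 ⟨lift_none hc b _, y.2⟩⟩
      left_inv := by
        rintro ⟨x, hx⟩
        have h := ((bord_mulVec_eq_zero_iff hc b S x).1 hx).1
        refine Subtype.ext (funext fun o => ?_)
        cases o with
        | none =>
          simp only [lift, Option.elim]
          field_simp
          linarith
        | some j => rfl
      right_inv := fun _ => rfl }
  have h1 := LinearMap.finrank_range_add_finrank_ker (bord c b S).mulVecLin
  have h2 := LinearMap.finrank_range_add_finrank_ker S.mulVecLin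
  rw [e.finrank_eq] at h1
  simp only [Module.finrank_fintype_fun_eq_card, Fintype.card_option] at h1 h2
  unfold Matrix.rank
  omega

/-! ### General position and Schur complements -/

variable [DecidableEq W]

lemma InGenPos.corner_pos {A : Matrix (Option W) (Option W) ℝ} {d : ℕ}
    (hA : InGenPos A (d + 1)) : 0 < A none none := by
  obtain ⟨hps, hr, hk⟩ := (inGenPos_iff _ _).1 hA
  refine lt_of_le_of_ne hps.diag_nonneg fun h0 => ?_
  have hle : d + 1 ≤ (Finset.univ : Finset (Option W)).card := by
    rw [← hr]; exact A.rank_le_card_width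
  obtain ⟨α, hα, -, hcard⟩ := Finset.exists_subsuperset_card_eq
    (Finset.subset_univ ({none} : Finset (Option W))) (by simp) hle
  have hne : none ∈ α := hα (Finset.mem_singleton_self _)
  have := hk α hcard (Pi.single none 1)
    (fun i hi => Pi.single_eq_of_ne (fun h : i = none => hi (by rwa [h])) _)
    ((hps.dotProduct_mulVec_zero_iff _).1 (by simp [← h0]))
  simpa using congrFun this none

lemma InGenPos.of_bord {c : ℝ} (hc : 0 < c) {b : W → ℝ} {S : Matrix W W ℝ} {d : ℕ}
    (h : InGenPos (bord c b S) (d + 1)) : InGenPos S d := by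
  rw [inGenPos_iff] at h ⊢
  obtain ⟨hps, hr, hk⟩ := h
  rw [rank_bord hc.ne'] at hr
  refine ⟨(bord_posSemidef_iff hc b S).1 hps, by omega, fun α hα y hy hSy => ?_⟩
  have := hk α.insertNone (by rw [Finset.card_insertNone, hα]) (lift c b y) ?_
    ((bord_mulVec_eq_zero_iff hc.ne' b S _).2 ⟨lift_none hc.ne' b y, hSy⟩)
  · exact funext fun j => congrFun this (some j)
  · intro o ho
    cases o with
    | none => simp at ho
    | some j => exact hy j (by simpa using ho)

/-- For a suitable border, the bordered matrix is in general position: the border is chosen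
non-orthogonal to one kernel vector of `S` for each possible support of size `d + 1`. -/
lemma InGenPos.exists_bord {S : Matrix W W ℝ} {d : ℕ} (h : InGenPos S d) :
    ∃ b : W → ℝ, InGenPos (bord 1 b S) (d + 1) := by
  obtain ⟨hps, hr, hk⟩ := (inGenPos_iff _ _).1 h
  let I := {β : Finset W // β.card = d + 1 ∧ ∃ z : W → ℝ, (∀ i ∉ β, z i = 0) ∧ S *ᵥ z = 0 ∧ z ≠ 0}
  choose z hzs hzk hz using fun β : I => β.2.2
  obtain ⟨f, hf⟩ := Module.exists_dual_forall_apply_ne_zero (K := ℝ) z hz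
  let b : W → ℝ := fun j => f (Pi.single j 1)
  have hb : ∀ y : W → ℝ, b ⬝ᵥ y = f y := by
    intro y
    conv_rhs => rw [pi_eq_sum_univ' y, map_sum]
    refine Finset.sum_congr rfl fun j _ => ?_
    rw [map_smul, smul_eq_mul, mul_comm]
  have key : ∀ β : Finset W, β.card = d + 1 → ∀ y : W → ℝ, (∀ i ∉ β, y i = 0) →
      S *ᵥ y = 0 → b ⬝ᵥ y = 0 → y = 0 := by
    intro β hβ y hys hyk hby
    by_contra hy
    let B : I := ⟨β, hβ, y, hys, hyk, hy⟩
    -- It suffices that `y` is a multiple of `z B`; cancel one coordinate of `y`.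
    obtain ⟨i, hi⟩ := Function.ne_iff.1 (hz B)
    have hiβ : i ∈ β := by
      by_contra hn
      exact hi (hzs B i hn)
    have hzi : z B i ≠ 0 := hi
    have h0 := hk (β.erase i) (by rw [Finset.card_erase_of_mem hiβ, hβ]; rfl)
      (y - (y i / z B i) • z B) ?_ ?_
    · rw [sub_eq_zero] at h0
      have h1 : y i / z B i * f (z B) = 0 := by
        rw [← hby, hb]
        conv_rhs => rw [h0]
        simp
      rcases mul_eq_zero.1 h1 with h2 | h2
      · rw [h2, zero_smul] at h0
        exact hy h0
      · exact hf B h2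
    · intro j hj
      by_cases hji : j = i
      · subst hji
        simp [hzi]
      · have hjβ : j ∉ β := fun h => hj (Finset.mem_erase.2 ⟨hji, h⟩)
        simp [hys j hjβ, hzs B j hjβ]
    · rw [mulVec_sub, mulVec_smul, hyk, hzk B]
      simp
  refine ⟨b, (inGenPos_iff _ _).2 ⟨(bord_posSemidef_iff one_pos b S).2 hps,
    by rw [rank_bord one_ne_zero, hr], fun α hα x hx hkx => ?_⟩⟩
  obtain ⟨h0, h1⟩ := (bord_mulVec_eq_zero_iff one_ne_zero b S x).1 hkx
  have hsupp : ∀ i ∉ α.eraseNone, x (some i) = 0 := fun i hi => hx _ (by simpa using hi)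
  have hy : (fun j => x (some j)) = 0 := by
    by_cases hn : none ∈ α
    · exact hk α.eraseNone (by rw [Finset.card_eraseNone_of_mem hn, hα]; rfl) _ hsupp h1
    · refine key α.eraseNone (by rw [Finset.card_eraseNone_of_not_mem hn, hα]) _ hsupp h1 ?_
      simpa [hx none hn] using h0
  rw [hy] at h0
  funext o
  cases o with
  | none => simpa using h0
  | some j => exact congrFun hy j

/-! ### Coning a graph raises the Gaussian rank by one -/

/-- The hypotheses say that `G` is the cone over `H` with apex `none`. -/
lemma gRankProp_cone (G : SimpleGraph (Option W)) (H : SimpleGraph W)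
    (hn : ∀ w, G.Adj none (some w)) (hs : ∀ i j, G.Adj (some i) (some j) ↔ H.Adj i j) (d : ℕ) :
    GRankProp G (d + 1) ↔ GRankProp H d := by
  constructor
  · intro hG S hS
    obtain ⟨b, hb⟩ := hS.exists_bord
    obtain ⟨P, hP, hdiag, hedge⟩ := hG _ hb
    obtain ⟨T, hT⟩ := exists_eq_bord P hP.isHermitian
    have hc : P none none = 1 := hdiag none
    have hrow : (fun j => P none (some j)) = b := funext fun j => hedge _ _ (hn j)
    rw [hc, hrow] at hT
    subst hT
    refine ⟨T, (bord_posDef_iff one_pos b T).1 hP, fun i => ?_, fun i j hij => ?_⟩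
    · simpa [bord] using hdiag (some i)
    · simpa [bord] using hedge (some i) (some j) ((hs i j).2 hij)
  · intro hH A hA
    have hc := hA.corner_pos
    obtain ⟨S, hS⟩ := exists_eq_bord A hA.1.isHermitian
    generalize A none none = c at hc hS
    generalize (fun j => A none (some j)) = b at hS
    subst hS
    obtain ⟨P, hP, hdiag, hedge⟩ := hH S (hA.of_bord hc)
    refine ⟨bord c b P, (bord_posDef_iff hc b P).2 hP, fun i => ?_, fun i j hij => ?_⟩
    · cases i with
      | none => rfl
      | some i => simp [bord, hdiag i]
    · rcases i with _ | i <;> rcases j with _ | j <;> simp only [bord]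
      rw [hedge i j ((hs i j).1 hij)]

end Bordered

lemma InGenPos.submatrix_equiv {V V' : Type*} [Fintype V] [DecidableEq V] [Fintype V']
    [DecidableEq V'] (e : V' ≃ V) {A : Matrix V V ℝ} {d : ℕ} (h : InGenPos A d) :
    InGenPos (A.submatrix e e) d := by
  rw [inGenPos_iff] at h ⊢
  obtain ⟨hps, hr, hk⟩ := h
  refine ⟨hps.submatrix e, by rw [rank_submatrix, hr], fun α hα x hx hAx => ?_⟩
  rw [submatrix_mulVec_equiv] at hAx
  have := hk (α.map e.toEmbedding) (by rw [Finset.card_map, hα]) (x ∘ e.symm)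
    (fun i hi => hx _ (by simpa [Finset.mem_map_equiv] using hi))
    (funext fun i => by simpa using congrFun hAx (e.symm i))
  exact funext fun i => by simpa using congrFun this (e i)

lemma GRankProp.of_iso {V V' : Type*} [Fintype V] [DecidableEq V] [Fintype V'] [DecidableEq V']
    {G : SimpleGraph V} {G' : SimpleGraph V'} (e : G' ≃g G) {d : ℕ} (h : GRankProp G d) :
    GRankProp G' d := by
  intro A hA
  obtain ⟨P, hP, hdiag, hedge⟩ := h _ (hA.submatrix_equiv e.symm.toEquiv)
  refine ⟨P.submatrix e e, hP.submatrix e.injective, fun i => ?_, fun i j hij => ?_⟩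
  · simpa using hdiag (e i)
  · simpa using hedge (e i) (e j) (e.map_adj_iff.2 hij)

lemma not_gRankProp_zero {V : Type*} [Fintype V] [DecidableEq V] [Nonempty V]
    (G : SimpleGraph V) : ¬ GRankProp G 0 := by
  intro h
  obtain ⟨P, hP, hdiag, -⟩ := h 0 ⟨PosSemidef.zero, rank_zero, fun α hα => by
    obtain rfl := Finset.card_eq_zero.1 hα
    simp⟩
  obtain ⟨i⟩ := ‹Nonempty V›
  have := hP.diag_pos (i := i)
  simp [hdiag i] at this

lemma gRankProp_card {V : Type*} [Fintype V] [DecidableEq V] (G : SimpleGraph V) :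
    GRankProp G (Fintype.card V) := by
  intro A hA
  refine ⟨A, .of_dotProduct_mulVec_pos hA.1.isHermitian fun x hx => ?_,
    fun _ => rfl, fun _ _ _ => rfl⟩
  refine (hA.1.dotProduct_mulVec_nonneg x).lt_of_ne' fun h => hx ?_
  exact ((inGenPos_iff _ _).1 hA).2.2 Finset.univ Finset.card_univ x
    (fun i hi => (hi (Finset.mem_univ i)).elim) ((hA.1.dotProduct_mulVec_zero_iff x).1 h)

/-- If `G` has at least two vertices and `v` is adjacent to all other
vertices, then `r(G) = r(G − v) + 1`. -/
theorem gaussianRank_deleteVertex_of_adj_all {V : Type*} [Fintype V] [DecidableEq V]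
    (G : SimpleGraph V) (hcard : 2 ≤ Fintype.card V) (v : V)
    (hadj : ∀ u : V, u ≠ v → G.Adj v u) :
    gaussianRank G =
      gaussianRank (G.induce ((({v}ᶜ : Finset V) : Finset V) : Set V)) + 1 := by
  set H := G.induce ((({v}ᶜ : Finset V) : Finset V) : Set V) with hH
  have hmem : ∀ u : V, u ∈ ((({v}ᶜ : Finset V) : Finset V) : Set V) ↔ u ≠ v := fun u => by simp
  obtain ⟨u, hu⟩ : ∃ u, u ≠ v :=
    have : Nontrivial V := Fintype.one_lt_card_iff_nontrivial.1 hcard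
    exists_ne v
  have hne : Nonempty ((({v}ᶜ : Finset V) : Finset V) : Set V) := ⟨⟨u, (hmem u).2 hu⟩⟩
  let e : Option ((({v}ᶜ : Finset V) : Finset V) : Set V) ≃ V :=
    Equiv.ofBijective (fun o => o.elim v Subtype.val) <| by
      constructor
      · rintro (_ | ⟨a, ha⟩) (_ | ⟨b, hb⟩) hab
        · rfl
        · exact ((hmem b).1 hb hab.symm).elim
        · exact ((hmem a).1 ha hab).elim
        · exact congrArg some (Subtype.ext hab)
      · intro w
        by_cases hw : w = v
        · exact ⟨none, hw.symm⟩
        · exact ⟨some ⟨w, (hmem w).2 hw⟩, rfl⟩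
  let ι : G.comap e ≃g G := SimpleGraph.Iso.comap e G
  have hstep : ∀ d, GRankProp G (d + 1) ↔ GRankProp H d := fun d =>
    (show GRankProp G (d + 1) ↔ GRankProp (G.comap e) (d + 1) from
      ⟨GRankProp.of_iso ι, GRankProp.of_iso ι.symm⟩).trans
      (gRankProp_cone (G.comap e) H (fun w => hadj w ((hmem w).1 w.2)) (fun _ _ => Iff.rfl) d)
  have hmin : gaussianRank H ∈ {r : ℕ | 0 < r ∧ GRankProp H r} :=
    Nat.sInf_mem ⟨_, Fintype.card_pos, gRankProp_card H⟩
  refine IsLeast.csInf_eq ⟨⟨Nat.succ_pos _, (hstep _).2 hmin.2⟩, ?_⟩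
  rintro (_ | r) ⟨hr, hG⟩
  · exact (lt_irrefl 0 hr).elim
  · rw [hstep] at hG
    have hr0 : r ≠ 0 := fun h => not_gRankProp_zero H (h ▸ hG)
    exact Nat.succ_le_succ (Nat.sInf_le ⟨Nat.pos_of_ne_zero hr0, hG⟩)
end

section
/- Let G be a finite simple graph whose connected components are G₁, …, G_k (each regarded as an induced subgraph of G). Then r(G) = max{ r(G_i) : i = 1, …, k }, where r denotes the Gaussian rank. -/
open Matrix MeasureTheory

open Module

/-- A family of vectors is in general position at level `d` if any at most `d` of its members are
linearly independent. -/
def VecGenPos {V E : Type*} [AddCommGroup E] [Module ℝ E] (v : V → E) (d : ℕ) : Prop :=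
  ∀ α : Finset V, α.card ≤ d → LinearIndepOn ℝ v (α : Set V)

/-! ### Gram matrices of vectors in general position -/

section vectors

variable {V E : Type*} [Fintype V] [NormedAddCommGroup E] [InnerProductSpace ℝ E]

lemma gram_mulVec_eq_zero_iff (v : V → E) (x : V → ℝ) :
    gram ℝ v *ᵥ x = 0 ↔ ∑ i, x i • v i = 0 := by
  constructor
  · intro h
    have := star_dotProduct_gram_mulVec v x x
    rw [h, dotProduct_zero] at this
    exact inner_self_eq_zero.mp this.symm
  · intro h
    ext i
    have : (gram ℝ v *ᵥ x) i = inner ℝ (v i) (∑ j, x j • v j) := by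
      simp [mulVec, dotProduct, inner_sum, inner_smul_right, mul_comm]
    rw [this, h, inner_zero_right, Pi.zero_apply]

/-- The Gram matrix and the linear combination map of `v` have the same kernel, hence the same
rank. -/
lemma rank_gram (v : V → E) :
    (gram ℝ v).rank = finrank ℝ (Submodule.span ℝ (Set.range v)) := by
  have hker : LinearMap.ker (gram ℝ v).mulVecLin
      = LinearMap.ker (Fintype.linearCombination ℝ v) := by
    ext x
    simp [LinearMap.mem_ker, Fintype.linearCombination_apply, gram_mulVec_eq_zero_iff]
  have h1 := LinearMap.finrank_range_add_finrank_ker (gram ℝ v).mulVecLin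
  have h2 := LinearMap.finrank_range_add_finrank_ker (Fintype.linearCombination ℝ v)
  rw [hker] at h1
  rw [Fintype.range_linearCombination] at h2
  rw [Matrix.rank]
  omega

lemma inGenPos_gram_s13 [DecidableEq V] [FiniteDimensional ℝ E] {d : ℕ} {v : V → E}
    (hE : finrank ℝ E = d) (hd : d ≤ Fintype.card V) (hv : VecGenPos v d) :
    InGenPos (gram ℝ v) d := by
  refine ⟨posSemidef_gram ℝ v, ?_, fun α hα => ?_⟩
  · rw [rank_gram]
    apply le_antisymm
    · exact hE ▸ Submodule.finrank_le _
    · obtain ⟨α, -, hα⟩ := Finset.exists_subset_card_eq (s := (Finset.univ : Finset V)) hd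
      have hli : LinearIndependent ℝ (fun i : α => v i) := hv α hα.le
      have := finrank_span_eq_card hli
      rw [Fintype.card_coe, hα] at this
      rw [← this]
      apply Submodule.finrank_mono
      apply Submodule.span_mono
      rintro _ ⟨i, rfl⟩
      exact ⟨i, rfl⟩
  · have hli : LinearIndependent ℝ (fun i : α => v i) := hv α hα.le
    exact det_gram_ne_zero_iff_linearIndependent.mpr hli

/-- Vectors in general position that are prescribed on `s` can be chosen on all of `V`, as long as
the level does not exceed the dimension. -/
lemma exists_extend_vecGenPos [FiniteDimensional ℝ E] {d : ℕ} (hE : d ≤ finrank ℝ E)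
    {s : Set V} {v : s → E} (hv : VecGenPos v d) :
    ∃ w : V → E, (∀ i : s, w i = v i) ∧ VecGenPos w d := by
  classical
  suffices H : ∀ T : Finset V, ∃ w : V → E, (∀ i : s, w i = v i) ∧
      ∀ α : Finset V, (α : Set V) ⊆ s ∪ T → α.card ≤ d → LinearIndepOn ℝ w (α : Set V) by
    obtain ⟨w, h1, h2⟩ := H Finset.univ
    exact ⟨w, h1, fun α hα => h2 α (by simp) hα⟩
  intro T
  induction T using Finset.induction with
  | empty =>
    refine ⟨fun i => if h : i ∈ s then v ⟨i, h⟩ else 0, fun i => by simp, fun α hα hc => ?_⟩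
    have hαs : ∀ i ∈ α, i ∈ s := fun i hi => by simpa using hα hi
    have h := hv (α.subtype (· ∈ s)) ((Finset.card_subtype _ _).trans_le
      ((Finset.card_filter_le _ _).trans hc))
    have hinj : Function.Injective
        (fun i : (α : Set V) => (⟨⟨i, hαs i i.2⟩, by simp⟩ :
          ((α.subtype (· ∈ s) : Finset s) : Set s))) := by
      intro i j hij
      exact Subtype.ext (congrArg (fun x => ((x.1 : s) : V)) hij)
    have h' := LinearIndependent.comp h _ hinj
    unfold LinearIndepOn
    convert h' using 2 with i
    simp [hαs i i.2]
  | insert a T ha ih =>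
    obtain ⟨w, h1, h2⟩ := ih
    by_cases has : a ∈ s ∪ (T : Set V)
    · refine ⟨w, h1, fun α hα hc => h2 α (hα.trans ?_) hc⟩
      rw [Finset.coe_insert, Set.union_insert]
      exact Set.insert_subset has subset_rfl
    -- The new vector has to avoid the spans of all families of fewer than `d` old vectors.
    let S : Finset (Submodule ℝ E) :=
      (Finset.univ.filter (fun β : Finset V => β.card < d)).image
        (fun β : Finset V => Submodule.span ℝ (w '' (β : Set V)))
    have hS : ⊤ ∉ S := by
      intro h
      obtain ⟨β, hβ, htop⟩ := Finset.mem_image.mp h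
      have h3 : finrank ℝ (Submodule.span ℝ (w '' (β : Set V))) ≤ β.card := by
        rw [← Finset.coe_image]
        exact (finrank_span_finset_le_card _).trans Finset.card_image_le
      rw [htop, finrank_top] at h3
      have := (Finset.mem_filter.mp hβ).2
      omega
    obtain ⟨x, hx⟩ := (Set.ne_univ_iff_exists_notMem _).mp
      (Subspace.biUnion_ne_univ_of_top_notMem hS)
    have hx' : ∀ β : Finset V, β.card < d → x ∉ Submodule.span ℝ (w '' (β : Set V)) := by
      intro β hβ hmem
      apply hx
      simp only [Set.mem_iUnion]
      exact ⟨_, Finset.mem_image_of_mem _ (by simpa using hβ), hmem⟩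
    have has' : a ∉ s := fun h => has (Or.inl h)
    have hupd : ∀ β : Finset V, a ∉ β →
        Set.EqOn w (Function.update w a x) (β : Set V) := by
      intro β hβ i hi
      have : i ≠ a := fun h => hβ (h ▸ hi)
      simp [Function.update_of_ne this]
    refine ⟨Function.update w a x, fun i => ?_, fun α hα hc => ?_⟩
    · have : (i : V) ≠ a := fun h => has' (h ▸ i.2)
      rw [Function.update_of_ne this, h1]
    · have herase : ((α.erase a : Finset V) : Set V) ⊆ s ∪ T := by
        intro i hi
        have hi' := Finset.mem_erase.mp (Finset.mem_coe.mp hi)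
        have := hα (Finset.mem_coe.mpr hi'.2)
        simpa [hi'.1] using this
      have hna : a ∉ α.erase a := Finset.notMem_erase a α
      have hli : LinearIndepOn ℝ (Function.update w a x) ((α.erase a : Finset V) : Set V) :=
        (h2 _ herase ((Finset.card_erase_le).trans hc)).congr (hupd _ hna)
      by_cases haα : a ∈ α
      · rw [← Finset.insert_erase haα, Finset.coe_insert]
        refine hli.insert ?_
        rw [← (hupd _ hna).image_eq, Function.update_self]
        apply hx'
        have := Finset.card_erase_lt_of_mem haα
        omega
      · rwa [Finset.erase_eq_of_notMem haα] at hli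

end vectors

/-! ### Factorization of matrices in general position -/

section factorization

variable {V : Type*} [Fintype V] [DecidableEq V]

lemma InGenPos.le_card {A : Matrix V V ℝ} {d : ℕ} (hA : InGenPos A d) :
    d ≤ Fintype.card V := hA.2.1 ▸ A.rank_le_card_width

open scoped MatrixOrder Matrix.Norms.L2Operator in
/-- A converse to `inGenPos_gram`. The bound `d ≤ Fintype.card V` contained in the rank condition
lets smaller subfamilies be enlarged to ones of size exactly `d`. -/
lemma InGenPos.exists_gram_s13 {A : Matrix V V ℝ} {d : ℕ} (hA : InGenPos A d) :
    ∃ v : V → EuclideanSpace ℝ (Fin d), A = gram ℝ v ∧ VecGenPos v d := by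
  obtain ⟨B, hB⟩ := CStarAlgebra.nonneg_iff_eq_star_mul_self.mp hA.1.nonneg
  let w : V → EuclideanSpace ℝ V := fun j => WithLp.toLp 2 (fun i => B i j)
  have hw : A = gram ℝ w := by
    ext i j
    simp [hB, w, star_eq_conjTranspose, mul_apply, PiLp.inner_apply, mul_comm]
  let W := Submodule.span ℝ (Set.range w)
  have hW : finrank ℝ W = d := by rw [← rank_gram, ← hw, hA.2.1]
  -- Coordinates on the `d`-dimensional span of the columns of `B`.
  let e : W ≃ₗᵢ[ℝ] EuclideanSpace ℝ (Fin d) :=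
    ((stdOrthonormalBasis ℝ W).reindex (finCongr hW)).repr
  let v : V → EuclideanSpace ℝ (Fin d) := fun i => e ⟨w i, Submodule.subset_span ⟨i, rfl⟩⟩
  have hv : A = gram ℝ v := by
    rw [hw]
    ext i j
    simp only [gram_apply, v, LinearIsometryEquiv.inner_map_map, Submodule.coe_inner]
  refine ⟨v, hv, fun α hα => ?_⟩
  obtain ⟨β, hαβ, -, hβ⟩ := Finset.exists_subsuperset_card_eq (Finset.subset_univ α) hα
    hA.le_card
  have hdet := hA.2.2 β hβ
  rw [hv] at hdet
  have hli : LinearIndepOn ℝ v (β : Set V) :=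
    linearIndependent_of_det_gram_ne_zero (v := fun i : β => v i) hdet
  exact hli.mono hαβ

end factorization

lemma VecGenPos.comp {V W E : Type*} [AddCommGroup E] [Module ℝ E] {v : V → E} {d : ℕ}
    (hv : VecGenPos v d) {f : W → V} (hf : Function.Injective f) : VecGenPos (v ∘ f) d := by
  classical
  intro α hα
  have := hv (α.map ⟨f, hf⟩) (by simpa using hα)
  rw [Finset.coe_map] at this
  exact this.comp_of_image hf.injOn

/-! ### The Gaussian rank property -/

section grank

variable {V : Type*} [Fintype V] [DecidableEq V] {G : SimpleGraph V}

lemma grankProp_of_card_lt (G : SimpleGraph V) {r : ℕ} (h : Fintype.card V < r) :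
    GRankProp G r :=
  fun _ hA => absurd hA.le_card (by omega)

/-- The property at level `r` passes to induced subgraphs, because the vectors representing a
matrix on `s` extend to all of `V` in general position. -/
lemma GRankProp.induce {r : ℕ} (h : GRankProp G r) (s : Set V) [Fintype s] [DecidableEq s] :
    GRankProp (G.induce s) r := by
  intro A hA
  obtain ⟨v, rfl, hv⟩ := hA.exists_gram_s13
  obtain ⟨w, hw, hwg⟩ := exists_extend_vecGenPos (by simp) hv
  have hcard : Fintype.card s ≤ Fintype.card V :=
    Fintype.card_le_of_injective _ Subtype.val_injective
  obtain ⟨P, hP, hd, ho⟩ := h _ (inGenPos_gram_s13 (by simp) (hA.le_card.trans hcard) hwg)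
  refine ⟨P.submatrix (↑) (↑), hP.submatrix Subtype.val_injective, fun i => ?_,
    fun i j hij => ?_⟩
  · simp [hd, hw]
  · simp [ho i j hij, hw]

/-- Monotonicity in the level, by splitting off the projection to a line in general position. -/
lemma GRankProp.succ {r : ℕ} (h : GRankProp G r) : GRankProp G (r + 1) := by
  intro A hA
  obtain ⟨v, rfl, hv⟩ := hA.exists_gram_s13
  have hcard := hA.le_card
  -- Over the index type `Option V`, the vector at `none` is an additional one that keeps the family
  -- in general position.
  obtain ⟨w, hw, hwg⟩ := exists_extend_vecGenPos (V := Option V)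
    (E := EuclideanSpace ℝ (Fin (r + 1))) (d := r + 1) (s := Set.range some) (by simp)
    (v := v ∘ (Equiv.ofInjective some (Option.some_injective V)).symm)
    (hv.comp (Equiv.injective _))
  have hws : ∀ i : V, w (some i) = v i := fun i => by
    rw [hw ⟨some i, i, rfl⟩, Function.comp_apply, Equiv.ofInjective_symm_apply]
  let u := w none
  have hu : u ≠ 0 := (hwg {none} (by simp)).ne_zero (by simp)
  let K : Submodule ℝ (EuclideanSpace ℝ (Fin (r + 1))) := ℝ ∙ u
  have hK : finrank ℝ Kᗮ = r := by
    have h1 := K.finrank_add_finrank_orthogonal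
    rw [finrank_span_singleton hu, finrank_euclideanSpace_fin] at h1
    omega
  let v' : V → Kᗮ := fun i => Kᗮ.orthogonalProjectionOnto (v i)
  have hv' : VecGenPos v' r := by
    intro α hα
    have hins := hwg (insert none (α.map Function.Embedding.some))
      ((Finset.card_insert_le _ _).trans (by simpa using hα))
    rw [Finset.coe_insert, linearIndepOn_insert (by simp)] at hins
    obtain ⟨hli, hnot⟩ := hins
    have hvα : LinearIndepOn ℝ v (α : Set V) := by
      rw [Finset.coe_map] at hli
      exact (hli.comp_of_image (Option.some_injective V).injOn).congr fun i _ => hws i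
    have hnot' : u ∉ Submodule.span ℝ (Set.range fun i : α => v i) := by
      have himg : w '' ((α.map Function.Embedding.some : Finset (Option V)) : Set (Option V)) =
          Set.range fun i : α => v i := by
        ext x
        simp [hws]
      rwa [himg] at hnot
    refine LinearIndependent.map hvα (f := Kᗮ.orthogonalProjectionOnto.toLinearMap) ?_
    rw [Submodule.ker_orthogonalProjectionOnto, Submodule.orthogonal_orthogonal]
    exact (Submodule.disjoint_span_singleton' hu).mpr hnot'
  obtain ⟨P, hP, hd, ho⟩ := h _ (inGenPos_gram_s13 hK (by omega) hv')
  have hadd : ∀ i j, gram ℝ v i j =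
      gram ℝ v' i j + gram ℝ (fun i => K.orthogonalProjectionOnto (v i)) i j := by
    intro i j
    have key : ∀ x y : EuclideanSpace ℝ (Fin (r + 1)), inner ℝ x y =
        inner ℝ (Kᗮ.starProjection x) (Kᗮ.starProjection y) +
        inner ℝ (K.starProjection x) (K.starProjection y) := by
      intro x y
      have h1 := K.inner_starProjection_left_eq_right x (K.starProjection y)
      have h2 := Kᗮ.inner_starProjection_left_eq_right x (Kᗮ.starProjection y)
      rw [Submodule.starProjection_eq_self_iff.mpr
        (Submodule.starProjection_apply_mem _ _)] at h1 h2
      rw [h1, h2, ← inner_add_right, add_comm (Kᗮ.starProjection y),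
        K.starProjection_add_starProjection_orthogonal]
    exact key (v i) (v j)
  refine ⟨P + gram ℝ (fun i => K.orthogonalProjectionOnto (v i)),
    hP.add_posSemidef (posSemidef_gram ℝ _), fun i => ?_, fun i j hij => ?_⟩
  · rw [hadd, Matrix.add_apply, hd]
  · rw [hadd, Matrix.add_apply, ho i j hij]

lemma GRankProp.mono {r t : ℕ} (h : GRankProp G r) (hrt : r ≤ t) : GRankProp G t := by
  induction t, hrt using Nat.le_induction with
  | base => exact h
  | succ t _ ih => exact ih.succ

lemma posDef_blockDiagonal' {ι : Type*} [Fintype ι] [DecidableEq ι] {m : ι → Type*}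
    [∀ i, Fintype (m i)] {M : ∀ i, Matrix (m i) (m i) ℝ} (hM : ∀ i, (M i).PosDef) :
    (blockDiagonal' M).PosDef := by
  refine .of_dotProduct_mulVec_pos ?_ fun x hx => ?_
  · rw [IsHermitian, blockDiagonal'_conjTranspose]
    exact congrArg _ (funext fun i => (hM i).isHermitian)
  have hsum : star x ⬝ᵥ blockDiagonal' M *ᵥ x =
      ∑ c, (star fun i => x ⟨c, i⟩) ⬝ᵥ M c *ᵥ (fun i => x ⟨c, i⟩) := by
    rw [dotProduct, Fintype.sum_sigma]
    refine Finset.sum_congr rfl fun c _ => Finset.sum_congr rfl fun i _ => ?_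
    congr 1
    rw [mulVec, dotProduct, Fintype.sum_sigma, Finset.sum_eq_single c]
    · simp [mulVec, dotProduct]
    · intro c' _ hc'
      exact Finset.sum_eq_zero fun j _ => by rw [blockDiagonal'_apply_ne _ _ _ hc'.symm, zero_mul]
    · simp
  rw [hsum]
  obtain ⟨⟨c, i⟩, hci⟩ := Function.ne_iff.mp hx
  refine Finset.sum_pos' (fun c _ => (hM c).posSemidef.dotProduct_mulVec_nonneg _)
    ⟨c, Finset.mem_univ _, (hM c).dotProduct_mulVec_pos fun h => hci (congrFun h i)⟩

open scoped Classical in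
lemma grankProp_of_components {r : ℕ}
    (h : ∀ c : G.ConnectedComponent, GRankProp (G.induce c.supp) r) : GRankProp G r := by
  intro A hA
  obtain ⟨v, rfl, hv⟩ := hA.exists_gram_s13
  have hblock : ∀ c : G.ConnectedComponent, ∃ P : Matrix c.supp c.supp ℝ,
      P.PosDef ∧ MatchOn (G.induce c.supp) P (gram ℝ (v ∘ Subtype.val)) := by
    intro c
    have hvc : VecGenPos (v ∘ (Subtype.val : c.supp → V)) r := hv.comp Subtype.val_injective
    -- A component with fewer than `r` vertices already carries a positive definite block.
    rcases le_or_gt r (Fintype.card c.supp) with hr | hr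
    · exact h c _ (inGenPos_gram_s13 (by simp) hr hvc)
    · refine ⟨_, posDef_gram_of_linearIndependent ?_, fun _ => rfl, fun _ _ _ => rfl⟩
      have := hvc Finset.univ hr.le
      rwa [Finset.coe_univ, linearIndepOn_univ_iff] at this
  choose P hP hd ho using hblock
  let e : V → Σ c : G.ConnectedComponent, c.supp := fun i => ⟨G.connectedComponentMk i, i, rfl⟩
  have he : Function.Injective e := by
    intro i j hij
    exact congrArg (fun x => (x.2 : V)) hij
  have hsame : ∀ (c : G.ConnectedComponent) (i : V) (hi : i ∈ c.supp), e i = ⟨c, i, hi⟩ := by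
    rintro _ i rfl
    rfl
  refine ⟨(blockDiagonal' P).submatrix e e, (posDef_blockDiagonal' hP).submatrix he,
    fun i => ?_, fun i j hij => ?_⟩
  · rw [submatrix_apply, blockDiagonal'_apply_eq, hd]
    rfl
  · have hj : j ∈ (G.connectedComponentMk i).supp :=
      SimpleGraph.ConnectedComponent.sound hij.symm.reachable
    rw [submatrix_apply, hsame _ j hj, blockDiagonal'_apply_eq,
      ho (G.connectedComponentMk i) ⟨i, rfl⟩ ⟨j, hj⟩ hij]
    rfl

lemma gaussianRank_spec (G : SimpleGraph V) :
    0 < gaussianRank G ∧ GRankProp G (gaussianRank G) :=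
  Nat.sInf_mem (s := {r : ℕ | 0 < r ∧ GRankProp G r})
    ⟨Fintype.card V + 1, Nat.succ_pos _, grankProp_of_card_lt G (Nat.lt_succ_self _)⟩

end grank

open scoped Classical in
/-- The Gaussian rank of a graph is the maximum of the Gaussian ranks of
its connected components (each regarded as an induced subgraph). -/
theorem gaussianRank_eq_max_components {V : Type*} [Fintype V] [DecidableEq V] [Nonempty V]
    (G : SimpleGraph V) :
    gaussianRank G =
      Finset.univ.sup
        (fun c : G.ConnectedComponent => gaussianRank (G.induce c.supp)) := by
  refine le_antisymm ?_ (Finset.sup_le fun c _ => ?_)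
  · have hle : ∀ c : G.ConnectedComponent, gaussianRank (G.induce c.supp) ≤
        Finset.univ.sup (fun c : G.ConnectedComponent => gaussianRank (G.induce c.supp)) :=
      fun c => Finset.le_sup (f := fun c : G.ConnectedComponent => gaussianRank (G.induce c.supp))
        (Finset.mem_univ c)
    refine Nat.sInf_le ⟨?_, grankProp_of_components fun c =>
      (gaussianRank_spec _).2.mono (hle c)⟩
    obtain ⟨x⟩ := ‹Nonempty V›
    exact (gaussianRank_spec _).1.trans_le (hle (G.connectedComponentMk x))
  · exact Nat.sInf_le ⟨(gaussianRank_spec G).1, (gaussianRank_spec G).2.induce c.supp⟩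
end

section
/- Let C_p denote the cycle graph on p vertices with p ≥ 3. Then the Gaussian rank of C_p equals 3; in particular κ*(C_p) = δ*(C_p) = 2, where κ* is the subgraph connectivity number and δ* is the degeneracy number. -/
/-!
The Gaussian rank of a cycle is found by two constructions.

*Rank at most three.* Triangulate the cycle `0, …, p - 1` as a fan with apex `0`. A rank-three
matrix `A` in general position is positive definite on each triangle `{0, k, k + 1}`, so Gram
vectors for a completion can be chosen one at a time (`fanVec`): `w_{k+1}` is the combination of
`w_0` and `w_k` that produces the prescribed products with these two (`exists_coeff`), plus a nonzero
multiple of a fresh coordinate vector that produces the prescribed norm. The matrix of the `w_k` is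
triangular with nonzero diagonal, so their Gram matrix is positive definite
(`fanVec_gram_posDef`), and it agrees with `A` on the fan, hence on the cycle (`GRankProp_three`).

*Rank more than two.* The all-ones matrix excludes rank one. For rank two, `A i j = 1 + i j` is the
Gram matrix of equally spaced collinear points `(1, i)`. Consecutive points are at distance one and
the endpoints at distance `p - 1`, so equality holds in the triangle inequality and no linearly
independent vectors have the same products along the cycle (`not_GRankProp_two`).

For the two graph parameters, every vertex of a subgraph has degree at most two, which bounds the
minimum degree and, by deletion of a neighbourhood, the vertex connectivity; the cycle itself is
two-regular and remains connected when one vertex is removed (`two_le_vertexConn`).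
-/

open Matrix MeasureTheory

/-! ### Positivity of quadratic forms on three coordinates -/

/-- The quadratic form of `P` at `a e_i + b e_j + c e_l`; the condition on `l` makes this vector
nonzero, while `i = j` is allowed. -/
lemma posDef_three {V : Type*} [Fintype V] [DecidableEq V] {P : Matrix V V ℝ} (hP : P.PosDef)
    {i j l : V} (hi : l ≠ i) (hj : l ≠ j) (a b : ℝ) {c : ℝ} (hc : c ≠ 0) :
    0 < a ^ 2 * P i i + b ^ 2 * P j j + c ^ 2 * P l l
      + 2 * a * b * P i j + 2 * a * c * P i l + 2 * b * c * P j l := by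
  have hs : ∀ u v, P u v = P v u := fun u v => by simpa using hP.isHermitian.apply v u
  have hx : (Pi.single i a + Pi.single j b + Pi.single l c : V → ℝ) ≠ 0 := by
    intro h
    have := congrFun h l
    simp [hi, hj] at this
    exact hc this
  have := hP.dotProduct_mulVec_pos hx
  simp [Matrix.mulVec_add, add_dotProduct, dotProduct_add, Matrix.mulVec_single,
    single_dotProduct] at this
  rw [hs j i, hs l i, hs l j] at this
  nlinarith [this]

/-- A rank-three matrix in general position is positive definite on every triple of indices. -/
lemma InGenPos.three {V : Type*} [Fintype V] [DecidableEq V] {A : Matrix V V ℝ}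
    (hA : InGenPos A 3) (hV : 3 ≤ Fintype.card V)
    {i j l : V} (hi : l ≠ i) (hj : l ≠ j) (a b : ℝ) {c : ℝ} (hc : c ≠ 0) :
    0 < a ^ 2 * A i i + b ^ 2 * A j j + c ^ 2 * A l l
      + 2 * a * b * A i j + 2 * a * c * A i l + 2 * b * c * A j l := by
  obtain ⟨T, hT, hcard⟩ := Finset.exists_superset_card_eq
    (s := {i, j, l}) (n := 3) Finset.card_le_three hV
  have hS := hA.1.submatrix (fun i : T => (i : V))
  have hS' := hS.posDef_iff_isUnit.2
    ((Matrix.isUnit_iff_isUnit_det _).2 (isUnit_iff_ne_zero.2 (hA.2.2 T hcard)))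
  exact posDef_three hS' (i := ⟨i, hT (by simp)⟩) (j := ⟨j, hT (by simp)⟩)
    (l := ⟨l, hT (by simp)⟩) (by simpa using hi) (by simpa using hj) a b hc

/-! ### Edges of the cycle -/

lemma cycleGraph_adj_cases {p : ℕ} {u v : Fin p} (h : (SimpleGraph.cycleGraph p).Adj u v) :
    (u : ℕ) + 1 = v ∨ (v : ℕ) + 1 = u ∨
      ((u : ℕ) = 0 ∧ (v : ℕ) + 1 = p) ∨ ((v : ℕ) = 0 ∧ (u : ℕ) + 1 = p) := by
  rw [SimpleGraph.cycleGraph_adj'] at h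
  have hu := u.2
  have hv := v.2
  rcases h with h | h <;> rw [Fin.val_sub] at h
  · rcases Nat.lt_or_ge (p - (v : ℕ) + u) p with h' | h'
    · rw [Nat.mod_eq_of_lt h'] at h; omega
    · rw [Nat.mod_eq_sub_mod h', Nat.mod_eq_of_lt (by omega)] at h; omega
  · rcases Nat.lt_or_ge (p - (u : ℕ) + v) p with h' | h'
    · rw [Nat.mod_eq_of_lt h'] at h; omega
    · rw [Nat.mod_eq_sub_mod h', Nat.mod_eq_of_lt (by omega)] at h; omega

lemma cycleGraph_adj_succ {p : ℕ} {u v : Fin p} (h : (u : ℕ) + 1 = v) :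
    (SimpleGraph.cycleGraph p).Adj u v := by
  rw [SimpleGraph.cycleGraph_adj']
  right
  rw [Fin.sub_val_of_le (by rw [Fin.le_def]; omega)]
  omega

lemma cycleGraph_adj_last {p : ℕ} (hp : 2 ≤ p) {u v : Fin p} (hu : (u : ℕ) = 0)
    (hv : (v : ℕ) + 1 = p) : (SimpleGraph.cycleGraph p).Adj u v := by
  rw [SimpleGraph.cycleGraph_adj', Fin.val_sub]
  left
  rw [hu, show p - (v : ℕ) + 0 = 1 by omega, Nat.mod_eq_of_lt (by omega)]

/-! ### Matrices of rank one and two without positive definite completion -/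

/-- A Gram matrix of `p` vectors in `ℝ^d`, any `d` of which are independent, is in general
position. -/
lemma inGenPos_gram_s18 {p d : ℕ} (hd : d ≤ p) (U : Matrix (Fin p) (Fin d) ℝ)
    (hU : ∀ f : Fin d → Fin p, Function.Injective f → (U.submatrix f id).det ≠ 0) :
    InGenPos (U * Uᵀ) d := by
  refine ⟨by simpa using Matrix.posSemidef_self_mul_conjTranspose U, ?_, ?_⟩
  · rw [Matrix.rank_self_mul_transpose]
    apply le_antisymm
    · simpa using U.rank_le_width
    · have h1 := Matrix.rank_submatrix_le U (Fin.castLE hd) id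
      rw [Matrix.rank_of_isUnit _ ((Matrix.isUnit_iff_isUnit_det _).2
        (isUnit_iff_ne_zero.2 (hU _ (Fin.castLE_injective hd))))] at h1
      simpa using h1
  · intro α hα
    let e : Fin d ≃ α := (Fintype.equivFinOfCardEq (by simpa using hα)).symm
    rw [← Matrix.det_submatrix_equiv_self e]
    have : ((U * Uᵀ).submatrix (fun i : α => (i : Fin p)) (fun i : α => (i : Fin p))).submatrix e e
        = U.submatrix (fun i => (e i : Fin p)) id * (U.submatrix (fun i => (e i : Fin p)) id)ᵀ := by
      ext i j
      simp [Matrix.mul_apply]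
    rw [this, Matrix.det_mul, Matrix.det_transpose]
    have h := hU (fun i => (e i : Fin p)) (Subtype.val_injective.comp e.injective)
    exact mul_ne_zero h h

/-- The all-ones matrix has no positive definite completion across even a single edge. -/
lemma not_GRankProp_one {p : ℕ} (hp : 3 ≤ p) : ¬ GRankProp (SimpleGraph.cycleGraph p) 1 := by
  intro h
  obtain ⟨P, hP, hd, he⟩ := h _ (inGenPos_gram_s18 (d := 1) (by omega) (Matrix.of fun _ _ => 1)
    (by intro f _; simp))
  have h01 := he ⟨0, by omega⟩ ⟨1, by omega⟩ (cycleGraph_adj_succ (by simp))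
  have h0 := hd ⟨0, by omega⟩
  have h1 := hd ⟨1, by omega⟩
  have := posDef_three hP (i := ⟨0, by omega⟩) (j := ⟨0, by omega⟩) (l := ⟨1, by omega⟩)
    (by simp) (by simp) 1 0 (c := -1) (by norm_num)
  simp only [h01, h0, h1] at this
  simp [Matrix.mul_apply] at this
  norm_num at this

/-- The obstruction is `A i j = 1 + i j`, the Gram matrix of the collinear points `(1, i)`. Applying
the form of a completion `P` to `(k + 1) e_k - e_0 - k e_{k+1}`, which is in the kernel of `A`,
gives `k (P 0 (k+1) - 1) > (k + 1) (P 0 k - 1)`, so `P 0 k > 1` from `k = 2` on, whereas the closing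
edge requires `P 0 (p-1) = 1`. -/
lemma not_GRankProp_two {p : ℕ} (hp : 3 ≤ p) : ¬ GRankProp (SimpleGraph.cycleGraph p) 2 := by
  intro h
  obtain ⟨P, hP, hd, he⟩ := h _ (inGenPos_gram_s18 (d := 2) (by omega)
    (Matrix.of fun i j => if j = 0 then 1 else (i : ℝ))
    (by
      intro f hf
      rw [Matrix.det_fin_two]
      simp only [Matrix.submatrix_apply, Matrix.of_apply, id]
      have : f 0 ≠ f 1 := fun h => by simpa using hf h
      intro h0
      apply this
      simp at h0
      have : ((f 0 : ℕ) : ℝ) = (f 1 : ℕ) := by linarith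
      exact Fin.ext (by exact_mod_cast this)))
  simp only [Matrix.mul_apply, Fin.sum_univ_two, Matrix.transpose_apply, Matrix.of_apply] at hd he
  simp at hd he
  have key : ∀ k : ℕ, 1 ≤ k → ∀ hk : k + 1 < p, 1 < P ⟨0, by omega⟩ ⟨k + 1, hk⟩ := by
    intro k hk1
    have step : ∀ k : ℕ, 1 ≤ k → ∀ hk : k + 1 < p, 1 ≤ P ⟨0, by omega⟩ ⟨k, by omega⟩ →
        1 < P ⟨0, by omega⟩ ⟨k + 1, hk⟩ := by
      intro k hk1 hk h
      have h3 := posDef_three hP (i := ⟨0, by omega⟩) (j := ⟨k, by omega⟩) (l := ⟨k + 1, hk⟩)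
        (by simp) (by simp) (-1) (k + 1) (c := -k) (by simp; omega)
      have e1 := he ⟨k, by omega⟩ ⟨k + 1, hk⟩ (cycleGraph_adj_succ (by simp))
      rw [hd, hd, hd, e1] at h3
      push_cast at h3
      have hk0 : (1 : ℝ) ≤ k := by exact_mod_cast hk1
      set x := P ⟨0, by omega⟩ ⟨k, by omega⟩
      set y := P ⟨0, by omega⟩ ⟨k + 1, hk⟩
      by_contra hy
      push Not at hy
      nlinarith [mul_nonneg (by linarith : (0 : ℝ) ≤ (k : ℝ) + 1) (sub_nonneg.2 h),
        mul_nonneg (by linarith : (0 : ℝ) ≤ (k : ℝ)) (sub_nonneg.2 hy)]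
    induction k, hk1 using Nat.le_induction with
    | base =>
      intro hk
      refine step 1 le_rfl hk ?_
      rw [he ⟨0, by omega⟩ ⟨1, by omega⟩ (cycleGraph_adj_succ (by simp))]
      simp
    | succ n hn ih => exact fun hk => step (n + 1) (by omega) hk (ih (by omega) (by omega)).le
  have h1 := key (p - 2) (by omega) (by omega)
  rw [he _ _ (cycleGraph_adj_last (by omega) (by simp) (by simp; omega))] at h1
  simp at h1

/-! ### Completion in rank three -/

/-- The vectors `w_0 = c e_0`, `w_{k+1} = α_k w_0 + β_k w_k + γ_k e_{k+1}` in `ℝ^p`: each new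
vector lies over the span of the apex `w_0` and its predecessor, plus a fresh coordinate. -/
noncomputable def fanVec (p : ℕ) (c : ℝ) (α β γ : ℕ → ℝ) : ℕ → Fin p → ℝ
  | 0 => fun j => if (j : ℕ) = 0 then c else 0
  | k + 1 => (α k • fun j : Fin p => if (j : ℕ) = 0 then c else 0)
      + β k • fanVec p c α β γ k + fun j : Fin p => if (j : ℕ) = k + 1 then γ k else 0

lemma fanVec_zero (p : ℕ) (c : ℝ) (α β γ : ℕ → ℝ) :
    fanVec p c α β γ 0 = fun j : Fin p => if (j : ℕ) = 0 then c else 0 := rfl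

lemma fanVec_succ (p : ℕ) (c : ℝ) (α β γ : ℕ → ℝ) (k : ℕ) :
    fanVec p c α β γ (k + 1) = α k • fanVec p c α β γ 0 + β k • fanVec p c α β γ k
      + fun j : Fin p => if (j : ℕ) = k + 1 then γ k else 0 := rfl

lemma fanVec_apply_of_lt {p : ℕ} (c : ℝ) (α β γ : ℕ → ℝ) {k : ℕ} {j : Fin p} (h : k < j) :
    fanVec p c α β γ k j = 0 := by
  induction k with
  | zero => simp [fanVec_zero]; omega
  | succ k ih =>
    have h0 : (j : ℕ) ≠ 0 := by omega
    have h1 : (j : ℕ) ≠ k + 1 := by omega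
    simp [fanVec_succ, ih (by omega), fanVec_zero, h0, h1]

lemma fanVec_apply_self_ne {p : ℕ} {c : ℝ} (hc : c ≠ 0) (α β γ : ℕ → ℝ)
    (hγ : ∀ k, k + 1 < p → γ k ≠ 0) (j : Fin p) : fanVec p c α β γ j j ≠ 0 := by
  rcases h : (j : ℕ) with _ | k
  · simp [fanVec_zero, h, hc]
  · have h0 : (j : ℕ) ≠ 0 := by omega
    simp [fanVec_succ, fanVec_apply_of_lt c α β γ (show k < j by omega), fanVec_zero, h]
    exact hγ k (by omega)

lemma fanVec_gram_posDef {p : ℕ} {c : ℝ} (hc : c ≠ 0) (α β γ : ℕ → ℝ)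
    (hγ : ∀ k, k + 1 < p → γ k ≠ 0) :
    (Matrix.of fun i j : Fin p =>
      fanVec p c α β γ i ⬝ᵥ fanVec p c α β γ j).PosDef := by
  let L : Matrix (Fin p) (Fin p) ℝ := Matrix.of fun i j => fanVec p c α β γ i j
  have hdet : L.det ≠ 0 := by
    rw [Matrix.det_of_isLowerTriangular L]
    · exact Finset.prod_ne_zero_iff.2 fun i _ => fanVec_apply_self_ne hc α β γ hγ i
    · intro i j hij
      exact fanVec_apply_of_lt c α β γ (by simpa using hij)
  have : (Matrix.of fun i j : Fin p => fanVec p c α β γ i ⬝ᵥ fanVec p c α β γ j) = L * Lᴴ := by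
    ext i j
    simp [L, Matrix.mul_apply, dotProduct]
  rw [this]
  apply Matrix.PosDef.mul_conjTranspose_self
  apply Matrix.vecMul_injective_of_isUnit
  exact (Matrix.isUnit_iff_isUnit_det _).2 (isUnit_iff_ne_zero.2 hdet)

/-- The equations on `(α, β, γ)` that make `w_{k+1}` have the prescribed products with `w_0`, `w_k`
and itself. -/
lemma exists_coeff {p : ℕ} (hp : 3 ≤ p) {A : Matrix (Fin p) (Fin p) ℝ} (hA : InGenPos A 3)
    (k : ℕ) : ∃ α β γ : ℝ, ∀ hk : k + 1 < p, γ ≠ 0 ∧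
      α * A ⟨0, by omega⟩ ⟨0, by omega⟩ + β * A ⟨0, by omega⟩ ⟨k, by omega⟩
        = A ⟨0, by omega⟩ ⟨k + 1, hk⟩ ∧
      α * A ⟨0, by omega⟩ ⟨k, by omega⟩ + β * A ⟨k, by omega⟩ ⟨k, by omega⟩
        = A ⟨k, by omega⟩ ⟨k + 1, hk⟩ ∧
      α ^ 2 * A ⟨0, by omega⟩ ⟨0, by omega⟩ + 2 * α * β * A ⟨0, by omega⟩ ⟨k, by omega⟩
        + β ^ 2 * A ⟨k, by omega⟩ ⟨k, by omega⟩ + γ ^ 2 = A ⟨k + 1, hk⟩ ⟨k + 1, hk⟩ := by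
  by_cases hk : k + 1 < p
  swap
  · exact ⟨0, 0, 0, fun h => absurd h hk⟩
  have hcard : 3 ≤ Fintype.card (Fin p) := by simpa using hp
  have h00 : 0 < A ⟨0, by omega⟩ ⟨0, by omega⟩ := by
    simpa using hA.three hcard (i := ⟨1, by omega⟩) (j := ⟨1, by omega⟩) (l := ⟨0, by omega⟩)
      (by simp) (by simp) 0 0 (c := 1) one_ne_zero
  -- The linear system is consistent: for `k = 0` its two equations coincide, for `k > 0` its
  -- determinant is a positive principal minor.
  obtain ⟨α, β, e1, e2⟩ : ∃ α β : ℝ,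
      α * A ⟨0, by omega⟩ ⟨0, by omega⟩ + β * A ⟨0, by omega⟩ ⟨k, by omega⟩
        = A ⟨0, by omega⟩ ⟨k + 1, hk⟩ ∧
      α * A ⟨0, by omega⟩ ⟨k, by omega⟩ + β * A ⟨k, by omega⟩ ⟨k, by omega⟩
        = A ⟨k, by omega⟩ ⟨k + 1, hk⟩ := by
    rcases Nat.eq_zero_or_pos k with rfl | hk0
    · exact ⟨A ⟨0, by omega⟩ ⟨0 + 1, hk⟩ / A ⟨0, by omega⟩ ⟨0, by omega⟩, 0,
        by field_simp; simp, by field_simp; simp⟩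
    · have hD := hA.three hcard (i := ⟨0, by omega⟩) (j := ⟨0, by omega⟩) (l := ⟨k, by omega⟩)
        (by simp; omega) (by simp; omega) (-A ⟨0, by omega⟩ ⟨k, by omega⟩) 0 h00.ne'
      generalize A ⟨0, by omega⟩ ⟨0, by omega⟩ = x at *
      generalize A ⟨0, by omega⟩ ⟨k, by omega⟩ = y at *
      generalize A ⟨k, by omega⟩ ⟨k, by omega⟩ = z at *
      generalize A ⟨0, by omega⟩ ⟨k + 1, hk⟩ = s at *
      generalize A ⟨k, by omega⟩ ⟨k + 1, hk⟩ = t at *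
      have hD' : x * z - y ^ 2 ≠ 0 := by
        intro h0
        have : x * (x * z - y ^ 2) = 0 := by rw [h0, mul_zero]
        nlinarith
      exact ⟨(s * z - y * t) / (x * z - y ^ 2), (x * t - y * s) / (x * z - y ^ 2),
        by rw [div_mul_eq_mul_div, div_mul_eq_mul_div, ← add_div, div_eq_iff hD']; ring,
        by rw [div_mul_eq_mul_div, div_mul_eq_mul_div, ← add_div, div_eq_iff hD']; ring⟩
  have h3 := hA.three hcard (i := ⟨0, by omega⟩) (j := ⟨k, by omega⟩) (l := ⟨k + 1, hk⟩)
    (by simp) (by simp) (-α) (-β) one_ne_zero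
  refine ⟨α, β, √(A ⟨k + 1, hk⟩ ⟨k + 1, hk⟩ - (α ^ 2 * A ⟨0, by omega⟩ ⟨0, by omega⟩
    + 2 * α * β * A ⟨0, by omega⟩ ⟨k, by omega⟩ + β ^ 2 * A ⟨k, by omega⟩ ⟨k, by omega⟩)),
    fun _ => ⟨?_, e1, e2, ?_⟩⟩
  · apply (Real.sqrt_pos.2 _).ne'
    rw [← e1, ← e2] at h3
    nlinarith [h3]
  · rw [Real.sq_sqrt]
    · ring
    · rw [← e1, ← e2] at h3
      nlinarith [h3]

/-- The Gram matrix of the fan vectors agrees with `A` on all edges `{0, k}` and `{k, k + 1}`. -/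
lemma GRankProp_three {p : ℕ} (hp : 3 ≤ p) : GRankProp (SimpleGraph.cycleGraph p) 3 := by
  intro A hA
  have hcard : 3 ≤ Fintype.card (Fin p) := by simpa using hp
  have h00 : 0 < A ⟨0, by omega⟩ ⟨0, by omega⟩ := by
    simpa using hA.three hcard (i := ⟨1, by omega⟩) (j := ⟨1, by omega⟩) (l := ⟨0, by omega⟩)
      (by simp) (by simp) 0 0 (c := 1) one_ne_zero
  have hs : ∀ u v, A u v = A v u := fun u v => by simpa using hA.1.isHermitian.apply v u
  choose α β γ hc using exists_coeff hp hA
  set c := √(A ⟨0, by omega⟩ ⟨0, by omega⟩) with hcdef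
  have hcc : c * c = A ⟨0, by omega⟩ ⟨0, by omega⟩ := Real.mul_self_sqrt h00.le
  set w := fanVec p c α β γ with hw
  -- The fresh coordinate vector is orthogonal to all earlier `w_i`.
  have horth : ∀ i k, i ≤ k →
      w i ⬝ᵥ (fun j : Fin p => if (j : ℕ) = k + 1 then γ k else 0) = 0 := by
    intro i k hik
    apply Finset.sum_eq_zero
    intro j _
    by_cases hj : (j : ℕ) = k + 1
    · rw [hw, fanVec_apply_of_lt c α β γ (by omega), zero_mul]
    · simp [hj]
  have hself : ∀ k, k + 1 < p → (fun j : Fin p => if (j : ℕ) = k + 1 then γ k else 0) ⬝ᵥ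
      (fun j : Fin p => if (j : ℕ) = k + 1 then γ k else 0) = γ k ^ 2 := by
    intro k hk
    rw [dotProduct, Finset.sum_eq_single ⟨k + 1, hk⟩]
    · simp [sq]
    · intro j _ hj
      have : (j : ℕ) ≠ k + 1 := fun h => hj (Fin.ext h)
      simp [this]
    · simp
  have hw00 : w 0 ⬝ᵥ w 0 = A ⟨0, by omega⟩ ⟨0, by omega⟩ := by
    rw [hw, fanVec_zero, dotProduct, Finset.sum_eq_single ⟨0, by omega⟩]
    · simpa using hcc
    · intro j _ hj
      have : (j : ℕ) ≠ 0 := fun h => hj (Fin.ext h)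
      simp [this]
    · simp
  have hsucc : ∀ k, w (k + 1) = α k • w 0 + β k • w k
      + fun j : Fin p => if (j : ℕ) = k + 1 then γ k else 0 := fun k => fanVec_succ _ _ _ _ _ k
  have key : ∀ k, ∀ hk : k < p, w 0 ⬝ᵥ w k = A ⟨0, by omega⟩ ⟨k, hk⟩ ∧
      w k ⬝ᵥ w k = A ⟨k, hk⟩ ⟨k, hk⟩ := by
    intro k
    induction k with
    | zero => exact fun hk => ⟨hw00, hw00⟩
    | succ k ih =>
      intro hk
      obtain ⟨-, e1, e2, e3⟩ := hc k hk
      obtain ⟨i1, i2⟩ := ih (by omega)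
      constructor
      · rw [hsucc, dotProduct_add, dotProduct_add, dotProduct_smul, dotProduct_smul,
          horth 0 k (by omega), hw00, i1, ← e1]
        simp
      · rw [hsucc]
        simp only [dotProduct_add, add_dotProduct, dotProduct_smul, smul_dotProduct, smul_eq_mul]
        rw [hself k hk, dotProduct_comm (w k) (w 0),
          (dotProduct_comm _ _).trans (horth 0 k (by omega)),
          (dotProduct_comm _ _).trans (horth k k le_rfl),
          horth 0 k (by omega), horth k k le_rfl, hw00, i1, i2, ← e3]
        ring
  have hnext : ∀ k, ∀ hk : k + 1 < p, w k ⬝ᵥ w (k + 1) = A ⟨k, by omega⟩ ⟨k + 1, hk⟩ := by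
    intro k hk
    obtain ⟨-, e1, e2, e3⟩ := hc k hk
    obtain ⟨i1, i2⟩ := key k (by omega)
    rw [hsucc, dotProduct_add, dotProduct_add, dotProduct_smul, dotProduct_smul,
      horth k k le_rfl, dotProduct_comm (w k) (w 0), i1, i2, ← e2]
    simp
  refine ⟨_, fanVec_gram_posDef (Real.sqrt_pos.2 h00).ne' α β γ fun k hk => (hc k hk).1,
    fun i => (key i i.2).2, ?_⟩
  rintro ⟨i, hi⟩ ⟨j, hj⟩ hij
  change w i ⬝ᵥ w j = _
  have := cycleGraph_adj_cases hij
  simp only at this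
  rcases this with h | h | ⟨h, -⟩ | ⟨h, -⟩
  · subst h; exact hnext i hj
  · subst h; rw [dotProduct_comm, hs]; exact hnext j hi
  · subst h; exact (key j hj).1
  · subst h; rw [dotProduct_comm, hs]; exact (key i hi).1

/-! ### Connectivity and degeneracy -/

lemma ncard_neighborSet_cycle {p : ℕ} (hp : 3 ≤ p) (v : Fin p) :
    ((SimpleGraph.cycleGraph p).neighborSet v).ncard = 2 := by
  obtain ⟨n, rfl⟩ : ∃ n, p = n + 3 := ⟨p - 3, by omega⟩
  rw [← SimpleGraph.coe_neighborFinset, Set.ncard_coe_finset]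
  exact SimpleGraph.cycleGraph_degree_three_le

/-- Deleting the neighbours of a vertex isolates it. -/
lemma vertexConn_le_ncard_neighborSet {V : Type*} [Finite V] (G : SimpleGraph V) (v : V) :
    vertexConn G ≤ (G.neighborSet v).ncard := by
  refine Nat.sInf_le ⟨G.neighborSet v, rfl, ?_⟩
  by_contra! h
  obtain ⟨hc, h1⟩ := h
  obtain ⟨x, hx, hxv⟩ := Set.exists_ne_of_one_lt_ncard h1 v
  have hv : v ∈ (G.neighborSet v)ᶜ := by simp
  obtain ⟨y, hy⟩ := (hc.preconnected ⟨v, hv⟩ ⟨x, hx⟩).exists_isPath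
  cases y with
  | nil => exact hxv rfl
  | @cons _ u _ hu _ => exact u.2 (by simpa using hu)

lemma vertexConn_of_isEmpty {V : Type*} [IsEmpty V] (G : SimpleGraph V) : vertexConn G = 0 := by
  refine Nat.le_zero.1 (Nat.sInf_le ⟨∅, by simp, Or.inr ?_⟩)
  simp [Set.eq_empty_of_isEmpty]

lemma minDeg_of_isEmpty {V : Type*} [IsEmpty V] (G : SimpleGraph V) : minDeg G = 0 := by
  simp [minDeg]

lemma ncard_neighborSet_sub {p : ℕ} (hp : 3 ≤ p) (H : (SimpleGraph.cycleGraph p).Subgraph)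
    (v : H.verts) : (H.coe.neighborSet v).ncard ≤ 2 := by
  rw [← ncard_neighborSet_cycle hp v]
  refine Set.ncard_le_ncard_of_injOn Subtype.val (fun x hx => ?_) Subtype.val_injective.injOn
  exact H.adj_sub hx

lemma ncard_neighborSet_top {p : ℕ} (hp : 3 ≤ p)
    (v : (⊤ : (SimpleGraph.cycleGraph p).Subgraph).verts) :
    ((⊤ : (SimpleGraph.cycleGraph p).Subgraph).coe.neighborSet v).ncard = 2 := by
  refine le_antisymm (ncard_neighborSet_sub hp _ v) ?_
  rw [← ncard_neighborSet_cycle hp v]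
  exact Set.ncard_le_ncard_of_injOn (fun x => ⟨x, trivial⟩) (fun x hx => by simpa using hx)
    (fun x _ y _ h => congrArg Subtype.val h)

/-- A graph that is cyclically enumerated by `f`, with consecutive vertices adjacent, stays
connected after deletion of at most one vertex. -/
lemma two_le_vertexConn {V : Type*} [Finite V] (G : SimpleGraph V) {p : ℕ} (hp : 3 ≤ p)
    (hV : Nat.card V = p) (f : ℕ → V) (hf : ∀ i j, f i = f j ↔ i ≡ j [MOD p])
    (hsurj : Function.Surjective f) (hadj : ∀ i, G.Adj (f i) (f (i + 1))) :
    2 ≤ vertexConn G := by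
  have hne : {k : ℕ | ∃ S : Set V, S.ncard = k ∧
      (¬ (G.induce Sᶜ).Connected ∨ Sᶜ.ncard ≤ 1)}.Nonempty :=
    ⟨_, Set.univ, rfl, Or.inr (by simp)⟩
  refine le_csInf hne ?_
  rintro k ⟨S, rfl, hS⟩
  by_contra! hlt
  have hcompl := Set.ncard_add_ncard_compl S
  rcases hS with hS | hS
  swap
  · omega
  apply hS
  obtain ⟨a, ha⟩ : ∃ a, S ⊆ {f a} := by
    have : Nonempty V := ⟨f 0⟩
    obtain ⟨x, hx⟩ := (Set.ncard_le_one_iff_subset_singleton (s := S)).1 (by omega)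
    obtain ⟨a, rfl⟩ := hsurj x
    exact ⟨a, hx⟩
  have hmem : ∀ s, s + 1 < p → f (a + 1 + s) ∈ Sᶜ := by
    intro s hs h
    have h1 := (hf _ _).1 (ha h)
    have h2 : 1 + s ≡ 0 [MOD p] := by
      apply Nat.ModEq.add_left_cancel' a
      simpa [add_assoc] using h1
    have := Nat.le_of_dvd (by omega) (Nat.modEq_zero_iff_dvd.1 h2)
    omega
  have hreach : ∀ t, ∀ h : (∀ s ≤ t, f (a + 1 + s) ∈ Sᶜ),
      (G.induce Sᶜ).Reachable ⟨f (a + 1), h 0 (by omega)⟩ ⟨f (a + 1 + t), h t le_rfl⟩ := by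
    intro t
    induction t with
    | zero => exact fun h => SimpleGraph.Reachable.refl _
    | succ t ih =>
      intro h
      refine (ih fun s hs => h s (by omega)).trans (SimpleGraph.Adj.reachable ?_)
      exact hadj _
  have hall : ∀ x : (Sᶜ : Set V),
      (G.induce Sᶜ).Reachable ⟨f (a + 1), hmem 0 (by omega)⟩ x := by
    rintro ⟨x, hx⟩
    obtain ⟨m, rfl⟩ := hsurj x
    -- The residue of `m - (a + 1)` modulo `p`.
    obtain ⟨t, ht, htm⟩ : ∃ t < p, f (a + 1 + t) = f m := by
      refine ⟨(m + (a + 1) * (p - 1)) % p, Nat.mod_lt _ (by omega), ?_⟩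
      rw [hf]
      have h1 : a + 1 + (m + (a + 1) * (p - 1)) % p ≡ a + 1 + (m + (a + 1) * (p - 1)) [MOD p] :=
        (Nat.mod_modEq _ _).add_left _
      have h2 : a + 1 + (m + (a + 1) * (p - 1)) = m + p * (a + 1) := by
        obtain ⟨q, rfl⟩ : ∃ q, p = q + 1 := ⟨p - 1, by omega⟩
        simp
        ring
      rw [h2] at h1
      exact h1.trans (by simp [Nat.ModEq])
    have := hreach t (fun s hs => by
      rcases Nat.lt_or_ge (s + 1) p with h | h
      · exact hmem s h
      · rw [show s = t by omega, htm]; exact hx)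
    simpa only [htm] using this
  exact { preconnected := fun x y => (hall x).symm.trans (hall y)
          nonempty := ⟨⟨f (a + 1), hmem 0 (by omega)⟩⟩ }

lemma vertexConn_top {p : ℕ} (hp : 3 ≤ p) :
    2 ≤ vertexConn (⊤ : (SimpleGraph.cycleGraph p).Subgraph).coe := by
  have hp0 : 0 < p := by omega
  refine two_le_vertexConn _ hp (by simp) (fun i => ⟨⟨i % p, Nat.mod_lt _ hp0⟩, trivial⟩) ?_ ?_ ?_
  · intro i j
    exact ⟨fun h => congrArg Fin.val (congrArg Subtype.val h), fun h => Subtype.ext (Fin.ext h)⟩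
  · rintro ⟨⟨x, hx⟩, _⟩
    exact ⟨x, by simp [Nat.mod_eq_of_lt hx]⟩
  · intro i
    simp only [SimpleGraph.Subgraph.coe_adj, SimpleGraph.Subgraph.top_adj]
    have hi := Nat.mod_lt i hp0
    have hmod : (i + 1) % p = (i % p + 1) % p := by simp
    rcases Nat.lt_or_ge (i % p + 1) p with h | h
    · exact cycleGraph_adj_succ (hmod.trans (Nat.mod_eq_of_lt h)).symm
    · refine (cycleGraph_adj_last (by omega) ?_ ?_).symm
      · simp [hmod, show i % p + 1 = p by omega]
      · simp; omega

/-- A supremum over subgraphs of a parameter bounded by `2` and reaching it at the whole graph. -/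
lemma sSup_subgraph_eq_two {V : Type*} {G : SimpleGraph V} (F : G.Subgraph → ℕ)
    (hle : ∀ H, F H ≤ 2) (htop : 2 ≤ F ⊤) : sSup {k : ℕ | ∃ H, F H = k} = 2 := by
  apply IsGreatest.csSup_eq
  refine ⟨⟨⊤, le_antisymm (hle _) htop⟩, ?_⟩
  rintro k ⟨H, rfl⟩
  exact hle H

/-- For the cycle graph `C_p` with `p ≥ 3`, the Gaussian rank equals `3`;
in particular `κ*(C_p) = δ*(C_p) = 2`. -/
theorem gaussianRank_cycleGraph {p : ℕ} (hp : 3 ≤ p) :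
    gaussianRank (SimpleGraph.cycleGraph p) = 3 ∧
      subgraphConn (SimpleGraph.cycleGraph p) = 2 ∧
      degeneracy (SimpleGraph.cycleGraph p) = 2 := by
  refine ⟨?_, ?_, ?_⟩
  · apply IsLeast.csInf_eq
    refine ⟨⟨by norm_num, GRankProp_three hp⟩, ?_⟩
    rintro r ⟨hr, h⟩
    by_contra! hlt
    interval_cases r
    · exact not_GRankProp_one hp h
    · exact not_GRankProp_two hp h
  · refine sSup_subgraph_eq_two _ (fun H => ?_) (vertexConn_top hp)
    rcases isEmpty_or_nonempty H.verts with h | ⟨⟨v⟩⟩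
    · rw [vertexConn_of_isEmpty]; omega
    · exact (vertexConn_le_ncard_neighborSet _ v).trans (ncard_neighborSet_sub hp H v)
  · refine sSup_subgraph_eq_two _ (fun H => ?_) ?_
    · rcases isEmpty_or_nonempty H.verts with h | ⟨⟨v⟩⟩
      · rw [minDeg_of_isEmpty]; omega
      · exact (Nat.sInf_le ⟨v, rfl⟩ : minDeg H.coe ≤ _).trans (ncard_neighborSet_sub hp H v)
    · refine le_csInf ⟨_, ⟨⟨0, by omega⟩, trivial⟩, rfl⟩ ?_
      rintro k ⟨v, rfl⟩
      exact (ncard_neighborSet_top hp v).ge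
end
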